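/- arXiv:1902.04945 — 2 statements merged into one kernel-verified Lean document; each statement's English description precedes it below -/
import Mathlib

section
/- Let d ≥ 1 be an integer, σ1, σ2 ∈ ℝ, 0 < q_i ≤ ∞ and 0 < p_i ≤ u_i < ∞ for i = 1, 2. Assume that (p1/u1)(1/p1 − 1/p2) > max{0, 1/u1 − 1/u2} and (p1/u1)(1/p1 − 1/p2) < (σ1 − σ2)/d ≤ 1/p1 − 1/p2. Set α = (u1/(u1 − p1)) · ((σ1 − σ2)/d − (p1/u1)(1/p1 − 1/p2)). Then there exists c > 0 such that e_k(id : ñ^{σ1}_{u1,p1,q1}(Q) → ñ^{σ2}_{u2,p2,q2}(Q)) ≥ c · k^{−α} for all k ∈ ℕ, and for every ε > 0 there exists c_ε > 0 such that e_k(id : ñ^{σ1}_{u1,p1,q1}(Q) → ñ^{σ2}_{u2,p2,q2}(Q)) ≤ c_ε · k^{−α+ε} for all k ∈ ℕ. -/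
open scoped ENNReal NNReal

noncomputable section

/-- `Q_{j,m} ⊆ Q = [0,1)^d` iff `0 ≤ m i < 2^j` for every coordinate `i`. -/
def inUnitCube (d j : ℕ) (m : Fin d → ℤ) : Prop :=
  ∀ i, 0 ≤ m i ∧ m i < 2 ^ j

/-- For `ν ≤ j`: `Q_{j,m} ⊆ Q_{ν,k}`. -/
def cubeSub (d j ν : ℕ) (m k : Fin d → ℤ) : Prop :=
  ∀ i, k i * 2 ^ (j - ν) ≤ m i ∧ m i < (k i + 1) * 2 ^ (j - ν)

/-- The finite-dimensional Morrey quasi-norm `‖· | m^{2^{jd}}_{u,p}‖` (`ℝ≥0∞`-valued),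
on coefficients indexed by the `m ∈ ℤ^d` with `Q_{j,m} ⊆ Q` (other coordinates are ignored). -/
def mNorm (d : ℕ) (u p : ℝ) (j : ℕ) (lam : (Fin d → ℤ) → ℂ) : ℝ≥0∞ :=
  ⨆ νk : {νk : ℕ × (Fin d → ℤ) // νk.1 ≤ j ∧ inUnitCube d νk.1 νk.2},
    (2 : ℝ≥0∞) ^ ((d : ℝ) * ((j : ℝ) - (νk.1.1 : ℝ)) * (1 / u - 1 / p)) *
      (∑' m : {m : Fin d → ℤ // cubeSub d j νk.1.1 m νk.1.2},
        ((‖lam m.1‖₊ : ℝ≥0∞)) ^ p) ^ (1 / p)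

/-- The `ℓ_q^{2^{jd}}` quasi-norm (`0 < q < ∞`) on level-`j` coefficients. -/
def lqNorm (d : ℕ) (q : ℝ) (j : ℕ) (lam : (Fin d → ℤ) → ℂ) : ℝ≥0∞ :=
  (∑' m : {m : Fin d → ℤ // inUnitCube d j m}, ((‖lam m.1‖₊ : ℝ≥0∞)) ^ q) ^ (1 / q)

/-- The quasi-norm of the sequence space `ñ^σ_{u,p,q}(Q)`, `q ∈ (0,∞]`. -/
def nNorm (d : ℕ) (σ u p : ℝ) (q : ℝ≥0∞) (lam : ℕ → (Fin d → ℤ) → ℂ) : ℝ≥0∞ :=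
  if q = ∞ then
    ⨆ j : ℕ, (2 : ℝ≥0∞) ^ ((j : ℝ) * (σ - d / u)) * mNorm d u p j (lam j)
  else
    (∑' j : ℕ, ((2 : ℝ≥0∞) ^ ((j : ℝ) * (σ - d / u)) * mNorm d u p j (lam j)) ^ q.toReal) ^
      (1 / q.toReal)

/-- `k`-th entropy number of the identity map between two quasi-norms on one ambient group:
the infimum of all `ε > 0` such that the `N₁`-unit ball is covered by `2^(k-1)` `N₂`-balls of
radius `ε`. -/
def entropyNumber {Λ : Type*} [AddCommGroup Λ] (N₁ N₂ : Λ → ℝ≥0∞) (k : ℕ) : ℝ≥0∞ :=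
  sInf {ε : ℝ≥0∞ | 0 < ε ∧ ∃ c : Fin (2 ^ (k - 1)) → Λ,
    ∀ x : Λ, N₁ x ≤ 1 → ∃ i, N₂ (x - c i) ≤ ε}

/-- Operator quasi-norm of the identity map between two quasi-norms on one ambient space:
the smallest `C` with `N₂ x ≤ C · N₁ x` for all `x`. -/
def opNorm {Λ : Type*} (N₁ N₂ : Λ → ℝ≥0∞) : ℝ≥0∞ :=
  sInf {C : ℝ≥0∞ | ∀ x, N₂ x ≤ C * N₁ x}

end

/-!
The Morrey condition on level `j` is saturated by Cantor-type sets of about `2 ^ (j T)` dyadic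
cubes of side length `2 ^ (-j)`, where `T = d (1 - p₁ / u₁)`, and with `D` the excess of
`σ₁ - σ₂` over its critical value, level `j` of the embedding has norm about `2 ^ (-j D)`. The
exponent is `α = D / T`.

Lower bound: the `{0, a}`-valued sequences supported on a saturating set lie in the unit ball. A
Hamming ball of radius a sixteenth of the number of cubes contains so few subsets that, with
`k ~ 2 ^ (j T)`, one of these sequences differs substantially from each of `2 ^ (k - 1)` given
centres on a fixed proportion of the cubes, hence is `2 ^ (-j D)`-far from all of them.

Upper bound: discard the levels `j ≥ J` and round the coefficients on the levels `j < J` to a mesh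
that, relative to their largest size, is the finer the smaller `j` is. By Chebyshev's inequality
only about `2 ^ (J T)` coefficients per level survive the rounding, so about `J² 2 ^ (J T)` bits
encode the rounded sequences, while interpolating the rounding error between its supremum and its
Morrey norm leaves an error about `2 ^ (-J D)` on each level. The factor `J²` and the summation of
the errors over the levels cost the `ε`.
-/

namespace Morrey

open Finset

section TwoRpow

lemma two_rpow_add (x y : ℝ) : (2 : ℝ≥0∞) ^ (x + y) = 2 ^ x * 2 ^ y :=
  ENNReal.rpow_add x y two_ne_zero ENNReal.ofNat_ne_top

lemma two_rpow_le_two_rpow {x y : ℝ} (h : x ≤ y) : (2 : ℝ≥0∞) ^ x ≤ 2 ^ y :=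
  ENNReal.rpow_le_rpow_of_exponent_le one_le_two h

lemma two_rpow_eq_ofReal (x : ℝ) : (2 : ℝ≥0∞) ^ x = ENNReal.ofReal (2 ^ x) := by
  rw [← ENNReal.ofReal_rpow_of_pos two_pos, ENNReal.ofReal_ofNat]

lemma two_rpow_mul_le_iff {x : ℝ} {a b : ℝ≥0∞} : 2 ^ x * a ≤ b ↔ a ≤ 2 ^ (-x) * b := by
  rw [ENNReal.rpow_neg]
  exact ENNReal.mul_le_iff_le_inv (by simp) (by simp)

end TwoRpow

section EntropyNumber

variable {Λ : Type*} [AddCommGroup Λ] {N₁ N₂ : Λ → ℝ≥0∞} {k : ℕ} {ε : ℝ≥0∞}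

lemma exists_fin_covering {β : Type*} {P : Set β} (hP : P.Nonempty) {S : Finset β} (hSP : ↑S ⊆ P)
    {n : ℕ} (hS : #S ≤ n) : ∃ f : Fin n → β, (∀ i, f i ∈ P) ∧ ∀ s ∈ S, s ∈ Set.range f := by
  obtain ⟨p₀, hp₀⟩ := hP
  obtain ⟨g⟩ : Nonempty (S ↪ Fin n) := Function.Embedding.nonempty_of_card_le (by simpa using hS)
  refine ⟨Function.extend g (↑) fun _ => p₀, fun i => ?_, fun s hs =>
    ⟨g ⟨s, hs⟩, g.injective.extend_apply _ _ _⟩⟩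
  by_cases hi : ∃ s, g s = i
  · obtain ⟨s, rfl⟩ := hi
    rw [g.injective.extend_apply]
    exact hSP s.2
  · rwa [Function.extend_apply' _ _ _ hi]

lemma entropyNumber_le_of_card_le {S : Finset Λ} (hS : #S ≤ 2 ^ (k - 1))
    (h : ∀ x, N₁ x ≤ 1 → ∃ y ∈ S, N₂ (x - y) ≤ ε) : entropyNumber N₁ N₂ k ≤ ε := by
  obtain ⟨c, -, hc⟩ := exists_fin_covering Set.univ_nonempty (Set.subset_univ (S : Set Λ)) hS
  refine le_of_forall_gt_imp_ge_of_dense fun η hη => sInf_le ⟨pos_of_gt hη, c, fun x hx => ?_⟩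
  obtain ⟨y, hy, hxy⟩ := h x hx
  obtain ⟨i, rfl⟩ := hc y hy
  exact ⟨i, hxy.trans hη.le⟩

lemma le_entropyNumber_of_forall_centers
    (h : ∀ c : Fin (2 ^ (k - 1)) → Λ, ∃ x, N₁ x ≤ 1 ∧ ∀ i, ε ≤ N₂ (x - c i)) :
    ε ≤ entropyNumber N₁ N₂ k := by
  refine le_sInf fun η ⟨_, c, hc⟩ => ?_
  obtain ⟨x, hx, hfar⟩ := h c
  obtain ⟨i, hi⟩ := hc x hx
  exact (hfar i).trans hi

end EntropyNumber

section Hamming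

variable {β : Type*} {S : Finset β}

-- Exponential moment method: each `t` with `#t ≤ r` contributes at least `x ^ r` to
-- `∑ t ⊆ S, x ^ #t = (1 + x) ^ #S`.
lemma rpow_mul_card_hammingBall_le {x : ℝ} (hx0 : 0 < x) (hx1 : x ≤ 1) (r : ℝ) :
    x ^ r * #{t ∈ S.powerset | (#t : ℝ) ≤ r} ≤ (1 + x) ^ #S := by
  calc x ^ r * #{t ∈ S.powerset | (#t : ℝ) ≤ r}
      = ∑ t ∈ S.powerset with (#t : ℝ) ≤ r, x ^ r := by
        rw [sum_const, nsmul_eq_mul, mul_comm]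
    _ ≤ ∑ t ∈ S.powerset with (#t : ℝ) ≤ r, x ^ #t := by
        refine sum_le_sum fun t ht => ?_
        rw [← Real.rpow_natCast]
        exact Real.rpow_le_rpow_of_exponent_ge hx0 hx1 (mem_filter.1 ht).2
    _ ≤ ∑ t ∈ S.powerset, x ^ #t :=
        sum_le_sum_of_subset_of_nonneg (filter_subset _ _) fun _ _ _ => by positivity
    _ = (1 + x) ^ #S := by
        simpa [add_comm] using sum_pow_mul_eq_add_pow x 1 S

lemma exists_forall_lt_card_symmDiff [DecidableEq β] {K : ℕ} {c : Fin K → Finset β}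
    (hc : ∀ i, c i ⊆ S) {r : ℝ} (hK : K * #{t ∈ S.powerset | (#t : ℝ) ≤ r} < 2 ^ #S) :
    ∃ b ⊆ S, ∀ i, r < #(symmDiff b (c i)) := by
  by_contra! hcover
  have hsub : S.powerset ⊆ univ.biUnion fun i =>
      {t ∈ S.powerset | (#t : ℝ) ≤ r}.image fun t => symmDiff t (c i) := by
    intro b hb
    obtain ⟨i, hi⟩ := hcover b (mem_powerset.1 hb)
    refine mem_biUnion.2 ⟨i, mem_univ i, mem_image.2 ⟨symmDiff b (c i), ?_, by simp⟩⟩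
    exact mem_filter.2 ⟨mem_powerset.2
      (symmDiff_le_sup.trans (union_subset (mem_powerset.1 hb) (hc i))), hi⟩
  refine hK.not_ge ?_
  calc 2 ^ #S = #S.powerset := (card_powerset S).symm
    _ ≤ ∑ i : Fin K, #({t ∈ S.powerset | (#t : ℝ) ≤ r}.image fun t => symmDiff t (c i)) :=
        (card_le_card hsub).trans card_biUnion_le
    _ ≤ ∑ _i : Fin K, #{t ∈ S.powerset | (#t : ℝ) ≤ r} := sum_le_sum fun _ _ => card_image_le
    _ = K * #{t ∈ S.powerset | (#t : ℝ) ≤ r} := by simp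

-- With `x = 1 / 4`, the Hamming ball of radius `#S / 16` has at most `(5 / 4 * 2 ^ (1 / 8)) ^ #S`
-- elements, and `2 ^ (1 / 2) * (5 / 4 * 2 ^ (1 / 8)) < 2`.
lemma mul_card_hammingBall_lt {K : ℝ} (hS : S.Nonempty) (hK : K ≤ 2 ^ (#S / 2 : ℝ)) :
    K * #{t ∈ S.powerset | (#t : ℝ) ≤ #S / 16} < 2 ^ #S := by
  have hball : (#{t ∈ S.powerset | (#t : ℝ) ≤ #S / 16} : ℝ) ≤
      2 ^ (#S / 8 : ℝ) * (5 / 4) ^ #S := by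
    have h := rpow_mul_card_hammingBall_le (S := S) (x := 1 / 4) (by norm_num) (by norm_num)
      (#S / 16)
    have h4 : (1 / 4 : ℝ) ^ (#S / 16 : ℝ) = (2 ^ (#S / 8 : ℝ))⁻¹ := by
      rw [show (1 / 4 : ℝ) = 2 ^ (-2 : ℝ) by rw [Real.rpow_neg two_pos.le]; norm_num,
        ← Real.rpow_mul two_pos.le, ← Real.rpow_neg two_pos.le]
      ring_nf
    rw [h4, inv_mul_le_iff₀ (by positivity)] at h
    norm_num at h ⊢
    exact h
  have hbase : (2 : ℝ) ^ (5 / 8 : ℝ) * (5 / 4) < 2 := by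
    have : (2 : ℝ) ^ (5 / 8 : ℝ) < 8 / 5 := by
      refine lt_of_pow_lt_pow_left₀ 8 (by norm_num) ?_
      rw [← Real.rpow_mul_natCast two_pos.le]
      norm_num
    linarith
  calc K * #{t ∈ S.powerset | (#t : ℝ) ≤ #S / 16}
      ≤ 2 ^ (#S / 2 : ℝ) * (2 ^ (#S / 8 : ℝ) * (5 / 4) ^ #S) := by gcongr
    _ = (2 ^ (5 / 8 : ℝ) * (5 / 4)) ^ #S := by
        rw [mul_pow, ← Real.rpow_mul_natCast two_pos.le, ← mul_assoc, ← Real.rpow_add two_pos]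
        ring_nf
    _ < 2 ^ #S := pow_lt_pow_left₀ hbase (by positivity) hS.card_pos.ne'

lemma exists_forall_card_div_lt_card_far [DecidableEq β] {E : Type*} [SeminormedAddCommGroup E]
    (hS : S.Nonempty) {K : ℕ} (hK : (K : ℝ) ≤ 2 ^ (#S / 2 : ℝ)) (a : E) (c : Fin K → β → E) :
    ∃ b ⊆ S, ∀ i, (#S / 16 : ℝ) <
      #{m ∈ S | ‖a‖ / 2 ≤ ‖(if m ∈ b then a else 0) - c i m‖} := by
  obtain ⟨b, hb, hfar⟩ := exists_forall_lt_card_symmDiff (S := S) (r := #S / 16)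
    (c := fun i => {m ∈ S | ‖a - c i m‖ < ‖a‖ / 2}) (fun i => filter_subset _ _)
    (by exact_mod_cast mul_card_hammingBall_lt hS hK)
  refine ⟨b, hb, fun i => (hfar i).trans_le ?_⟩
  refine Nat.cast_le.2 (card_le_card fun m hm => ?_)
  rcases mem_symmDiff.1 hm with ⟨hmb, hmc⟩ | ⟨hmc, hmb⟩
  · have hmS := hb hmb
    simpa [hmS, hmb] using hmc
  · obtain ⟨hmS, hclose⟩ := mem_filter.1 hmc
    have := norm_sub_norm_le a (c i m)
    simp only [mem_filter, hmS, hmb, if_false, zero_sub, norm_neg, true_and]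
    linarith

end Hamming

section DigitSet

variable {P : ℕ → Prop} [DecidablePred P]

/-- The integers `∑_{i ∈ s} 2 ^ i` with `s ⊆ {i < j | P i}`, that is, those with `j` binary digits
all of whose nonzero digits stand at places satisfying `P`: the left endpoints of the dyadic
intervals of length `2 ^ (-j)` at stage `j` of a Cantor-type construction. -/
def digitSet (P : ℕ → Prop) [DecidablePred P] (j : ℕ) : Finset ℤ :=
  {i ∈ range j | P i}.powerset.image fun s => ((∑ i ∈ s, 2 ^ i : ℕ) : ℤ)

lemma card_digitSet (j : ℕ) : #(digitSet P j) = 2 ^ Nat.count P j := by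
  have hinj : Function.Injective fun s : Finset ℕ => ((∑ i ∈ s, 2 ^ i : ℕ) : ℤ) :=
    Nat.cast_injective.comp (geomSum_injective le_rfl)
  rw [digitSet, card_image_of_injective _ hinj, card_powerset, Nat.count_eq_card_filter_range]

lemma nonneg_and_lt_of_mem_digitSet {j : ℕ} {x : ℤ} (hx : x ∈ digitSet P j) :
    0 ≤ x ∧ x < 2 ^ j := by
  obtain ⟨s, hs, rfl⟩ := mem_image.1 hx
  refine ⟨Nat.cast_nonneg _, ?_⟩
  exact_mod_cast Nat.geomSum_lt le_rfl fun i hi =>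
    mem_range.1 (mem_filter.1 (mem_powerset.1 hs hi)).1

lemma emod_two_pow_mem_digitSet {j : ℕ} (l : ℕ) {x : ℤ} (hx : x ∈ digitSet P j) :
    x % 2 ^ l ∈ digitSet P l := by
  obtain ⟨s, hs, rfl⟩ := mem_image.1 hx
  refine mem_image.2 ⟨{i ∈ s | i < l}, mem_powerset.2 fun i hi => ?_, ?_⟩
  · obtain ⟨his, hil⟩ := mem_filter.1 hi
    exact mem_filter.2 ⟨mem_range.2 hil, (mem_filter.1 (mem_powerset.1 hs his)).2⟩
  · have hlow : ∑ i ∈ s with i < l, 2 ^ i < 2 ^ l :=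
      Nat.geomSum_lt le_rfl fun i hi => (mem_filter.1 hi).2
    have hhigh : 2 ^ l ∣ ∑ i ∈ s with ¬ i < l, 2 ^ i :=
      dvd_sum fun i hi => pow_dvd_pow 2 (not_lt.1 (mem_filter.1 hi).2)
    have : (∑ i ∈ s, 2 ^ i) % 2 ^ l = ∑ i ∈ s with i < l, 2 ^ i := by
      rw [← sum_filter_add_sum_filter_not s (· < l), Nat.add_mod,
        Nat.mod_eq_zero_of_dvd hhigh, add_zero, Nat.mod_mod, Nat.mod_eq_of_lt hlow]
    exact_mod_cast this.symm

lemma card_digitSet_filter_le (j l : ℕ) (k : ℤ) :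
    #{x ∈ digitSet P j | k * 2 ^ l ≤ x ∧ x < (k + 1) * 2 ^ l} ≤ 2 ^ Nat.count P l := by
  rw [← card_digitSet]
  refine card_le_card_of_injOn (· % 2 ^ l)
    (fun x hx => emod_two_pow_mem_digitSet l (mem_filter.1 hx).1) fun x hx y hy hxy => ?_
  have hdiv : ∀ z : ℤ, k * 2 ^ l ≤ z ∧ z < (k + 1) * 2 ^ l → z / 2 ^ l = k := fun z hz =>
    (Int.ediv_eq_iff_of_pos (by positivity)).2 ⟨hz.1, by linarith [hz.2]⟩
  rw [← Int.ediv_mul_add_emod x (2 ^ l), ← Int.ediv_mul_add_emod y (2 ^ l),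
    hdiv x (mem_filter.1 hx).2, hdiv y (mem_filter.1 hy).2]
  exact congrArg _ hxy

lemma count_lt_succ_eq {f : ℕ → ℕ} (h0 : f 0 = 0) (hmono : Monotone f)
    (hstep : ∀ i, f (i + 1) ≤ f i + 1) (j : ℕ) : Nat.count (fun i => f i < f (i + 1)) j = f j := by
  induction j with
  | zero => simp [h0]
  | succ j ih =>
    have : f j ≤ f (j + 1) := hmono j.le_succ
    have := hstep j
    rw [Nat.count_succ, ih]
    split_ifs <;> omega

lemma exists_count_eq_floor {θ : ℝ} (h0 : 0 ≤ θ) (h1 : θ ≤ 1) :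
    ∃ (P : ℕ → Prop) (_ : DecidablePred P), ∀ j : ℕ, Nat.count P j = ⌊θ * j⌋₊ := by
  refine ⟨fun i => ⌊θ * i⌋₊ < ⌊θ * (i + 1 : ℕ)⌋₊, inferInstance,
    count_lt_succ_eq (f := fun i => ⌊θ * i⌋₊) (by simp) ?_ fun i => ?_⟩
  · exact fun i j hij => Nat.floor_mono (by gcongr)
  · rw [← Nat.floor_add_one (by positivity)]
    exact Nat.floor_mono (by push_cast; linarith)

open scoped Classical in
lemma exists_cubes_card_le {d : ℕ} {θ : ℝ} (h0 : 0 ≤ θ) (h1 : θ ≤ 1) (j : ℕ) :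
    ∃ S : Finset (Fin d → ℤ), (∀ m ∈ S, inUnitCube d j m) ∧
      (2 : ℝ) ^ (d * (θ * j - 1)) ≤ #S ∧
      ∀ ν ≤ j, ∀ k, (#{m ∈ S | cubeSub d j ν m k} : ℝ≥0∞) ≤ 2 ^ (d * ((j : ℝ) - ν) * θ) := by
  obtain ⟨P, _, hP⟩ := exists_count_eq_floor h0 h1
  refine ⟨Fintype.piFinset fun _ : Fin d => digitSet P j, fun m hm i =>
    nonneg_and_lt_of_mem_digitSet (Fintype.mem_piFinset.1 hm i), ?_, fun ν hν k => ?_⟩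
  · rw [Fintype.card_piFinset_const, card_digitSet, hP, Nat.cast_pow, Nat.cast_pow, Nat.cast_ofNat,
      ← Real.rpow_natCast, ← Real.rpow_natCast, ← Real.rpow_mul two_pos.le, mul_comm (d : ℝ)]
    refine Real.rpow_le_rpow_of_exponent_le one_le_two ?_
    gcongr
    exact (Nat.sub_one_lt_floor _).le
  · have hbox : {m ∈ Fintype.piFinset fun _ : Fin d => digitSet P j | cubeSub d j ν m k} ⊆
        Fintype.piFinset fun i =>
          {x ∈ digitSet P j | k i * 2 ^ (j - ν) ≤ x ∧ x < (k i + 1) * 2 ^ (j - ν)} := by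
      intro m hm
      rw [mem_filter, Fintype.mem_piFinset] at hm
      exact Fintype.mem_piFinset.2 fun i => mem_filter.2 ⟨hm.1 i, hm.2 i⟩
    have hcard : #{m ∈ Fintype.piFinset fun _ : Fin d => digitSet P j | cubeSub d j ν m k} ≤
        (2 ^ ⌊θ * (j - ν : ℕ)⌋₊) ^ d := by
      refine (card_le_card hbox).trans ?_
      rw [Fintype.card_piFinset, ← hP]
      exact (prod_le_prod' fun i _ => card_digitSet_filter_le j (j - ν) (k i)).trans_eq (by simp)
    calc (#{m ∈ Fintype.piFinset fun _ : Fin d => digitSet P j | cubeSub d j ν m k} : ℝ≥0∞)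
        ≤ ((2 ^ ⌊θ * (j - ν : ℕ)⌋₊) ^ d : ℕ) := by exact_mod_cast hcard
      _ = 2 ^ ((⌊θ * (j - ν : ℕ)⌋₊ : ℝ) * d) := by
          rw [ENNReal.rpow_mul, ENNReal.rpow_natCast, ENNReal.rpow_natCast]
          push_cast
          rfl
      _ ≤ 2 ^ (d * ((j : ℝ) - ν) * θ) := by
          refine two_rpow_le_two_rpow ?_
          rw [← Nat.cast_sub hν, show d * ((j - ν : ℕ) : ℝ) * θ = θ * (j - ν : ℕ) * d by ring]
          gcongr
          exact Nat.floor_le (by positivity)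

end DigitSet

section MorreyNorm

variable {d j : ℕ} {u p : ℝ} {lam r : (Fin d → ℤ) → ℂ} {A B a t : ℝ≥0∞}

lemma cubeSub_self (m : Fin d → ℤ) : cubeSub d j j m m := fun i => by simp

lemma cubeSub_zero_zero_iff {m : Fin d → ℤ} : cubeSub d j 0 m 0 ↔ inUnitCube d j m := by
  simp [cubeSub, inUnitCube]

lemma inUnitCube_of_cubeSub {ν : ℕ} {m k : Fin d → ℤ} (hν : ν ≤ j) (hk : inUnitCube d ν k)
    (hm : cubeSub d j ν m k) : inUnitCube d j m := fun i => by
  refine ⟨(mul_nonneg (hk i).1 (by positivity)).trans (hm i).1, (hm i).2.trans_le ?_⟩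
  calc (k i + 1) * 2 ^ (j - ν) ≤ 2 ^ ν * 2 ^ (j - ν) := by gcongr; exact (hk i).2
    _ = 2 ^ j := by rw [← pow_add, Nat.add_sub_cancel' hν]

lemma mNorm_le_iff (hp : 0 < p) : mNorm d u p j lam ≤ A ↔
    ∀ ν ≤ j, ∀ k, inUnitCube d ν k → ∑' m : {m // cubeSub d j ν m k}, ‖lam m‖ₑ ^ p ≤
      A ^ p * 2 ^ (d * ((j : ℝ) - ν) * (1 - p / u)) := by
  simp only [mNorm, iSup_le_iff, Subtype.forall, Prod.forall, and_imp]
  refine forall_congr' fun ν => ?_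
  rw [forall_comm]
  refine forall_congr' fun _ => forall_congr' fun k => forall_congr' fun _ => ?_
  rw [two_rpow_mul_le_iff, one_div p, ENNReal.rpow_inv_le_iff hp,
    ENNReal.mul_rpow_of_nonneg _ _ hp.le, ← ENNReal.rpow_mul, mul_comm,
    show -(d * ((j : ℝ) - ν) * (1 / u - p⁻¹)) * p = d * ((j : ℝ) - ν) * (1 - p / u) by
      field_simp; ring]
  rfl

lemma tsum_cube_le (hp : 0 < p) {ν : ℕ} (hν : ν ≤ j) {k : Fin d → ℤ} (hk : inUnitCube d ν k) :
    ∑' m : {m // cubeSub d j ν m k}, ‖lam m‖ₑ ^ p ≤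
      mNorm d u p j lam ^ p * 2 ^ (d * ((j : ℝ) - ν) * (1 - p / u)) :=
  (mNorm_le_iff hp).1 le_rfl ν hν k hk

lemma mNorm_zero (hp : 0 < p) : mNorm d u p j 0 = 0 := by
  simp [mNorm, hp]

lemma enorm_le_mNorm (hp : 0 < p) {m : Fin d → ℤ} (hm : inUnitCube d j m) :
    ‖lam m‖ₑ ≤ mNorm d u p j lam := by
  have h := (ENNReal.le_tsum (f := fun m' : {m' // cubeSub d j j m' m} => ‖lam m'‖ₑ ^ p)
    ⟨m, cubeSub_self m⟩).trans (tsum_cube_le (u := u) hp le_rfl hm)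
  simpa [ENNReal.rpow_le_rpow_iff hp] using h

-- Chebyshev's inequality on the unit cube.
lemma card_mul_rpow_le_mNorm (hp : 0 < p) {F : Finset (Fin d → ℤ)}
    (hF : ∀ m ∈ F, inUnitCube d j m ∧ t ≤ ‖lam m‖ₑ) :
    #F * t ^ p ≤ mNorm d u p j lam ^ p * 2 ^ (d * (j : ℝ) * (1 - p / u)) := by
  have hunit : inUnitCube d 0 0 := fun i => by simp
  calc (#F : ℝ≥0∞) * t ^ p = ∑ _m ∈ F, t ^ p := by rw [sum_const, nsmul_eq_mul]
    _ ≤ ∑ m ∈ F, Set.indicator {m | cubeSub d j 0 m 0} (fun m => ‖lam m‖ₑ ^ p) m := by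
        refine sum_le_sum fun m hm => ?_
        rw [Set.indicator_of_mem (cubeSub_zero_zero_iff.2 (hF m hm).1)]
        exact ENNReal.rpow_le_rpow (hF m hm).2 hp.le
    _ ≤ ∑' m : {m // cubeSub d j 0 m 0}, ‖lam m‖ₑ ^ p :=
        (ENNReal.sum_le_tsum F).trans_eq
          (tsum_subtype {m | cubeSub d j 0 m 0} fun m => ‖lam m‖ₑ ^ p).symm
    _ ≤ mNorm d u p j lam ^ p * 2 ^ (d * (j : ℝ) * (1 - p / u)) := by
        simpa using tsum_cube_le (u := u) hp j.zero_le hunit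

open scoped Classical in
lemma mNorm_le_of_card_le (hp : 0 < p) {S : Finset (Fin d → ℤ)}
    (hS : ∀ ν ≤ j, ∀ k, (#{m ∈ S | cubeSub d j ν m k} : ℝ≥0∞) ≤
      2 ^ (d * ((j : ℝ) - ν) * (1 - p / u)))
    (hlam : ∀ m, ‖lam m‖ₑ ≤ a) (hsupp : ∀ m ∉ S, lam m = 0) : mNorm d u p j lam ≤ a := by
  refine (mNorm_le_iff hp).2 fun ν hν k _ => ?_
  calc ∑' m : {m // cubeSub d j ν m k}, ‖lam m‖ₑ ^ p
      = ∑' m, Set.indicator {m | cubeSub d j ν m k} (fun m => ‖lam m‖ₑ ^ p) m :=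
        tsum_subtype {m | cubeSub d j ν m k} fun m => ‖lam m‖ₑ ^ p
    _ = ∑ m ∈ S, Set.indicator {m | cubeSub d j ν m k} (fun m => ‖lam m‖ₑ ^ p) m :=
        tsum_eq_sum fun m hm => by simp [Set.indicator_apply, hsupp m hm, hp]
    _ = ∑ m ∈ S with cubeSub d j ν m k, ‖lam m‖ₑ ^ p := by
        simp only [sum_filter, Set.indicator_apply, Set.mem_ofPred_eq]
    _ ≤ ∑ m ∈ S with cubeSub d j ν m k, a ^ p :=
        sum_le_sum fun m _ => ENNReal.rpow_le_rpow (hlam m) hp.le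
    _ = a ^ p * #{m ∈ S | cubeSub d j ν m k} := by rw [sum_const, nsmul_eq_mul, mul_comm]
    _ ≤ a ^ p * 2 ^ (d * ((j : ℝ) - ν) * (1 - p / u)) := by gcongr; exact hS ν hν k

lemma mNorm_le_of_inv_le {v : ℝ} (hp : 0 < p) (huv : 1 / v ≤ 1 / u) :
    mNorm d u p j lam ≤ 2 ^ (d * (j : ℝ) * (1 / u - 1 / v)) * mNorm d v p j lam := by
  refine (mNorm_le_iff hp).2 fun ν hν k hk => (tsum_cube_le (u := v) hp hν hk).trans ?_
  rw [ENNReal.mul_rpow_of_nonneg _ _ hp.le, ← ENNReal.rpow_mul,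
    mul_comm (2 ^ _) (mNorm _ _ _ _ _ ^ p), mul_assoc (mNorm _ _ _ _ _ ^ p), ← two_rpow_add]
  gcongr
  · exact one_le_two
  · have : 0 ≤ d * (ν : ℝ) * (1 / u - 1 / v) * p := by
      have := sub_nonneg.2 huv
      positivity
    linear_combination this

-- `‖r‖ ^ p₂ ≤ B ^ (p₂ - p₁) * ‖lam‖ ^ p₁` coefficientwise.
lemma mNorm_le_interpolation {p₁ p₂ : ℝ} (hp₁ : 0 < p₁) (hp : p₁ ≤ p₂)
    (hr : ∀ m, inUnitCube d j m → ‖r m‖ₑ ≤ ‖lam m‖ₑ ∧ ‖r m‖ₑ ≤ B) :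
    mNorm d (u * p₂ / p₁) p₂ j r ≤ B ^ (1 - p₁ / p₂) * mNorm d u p₁ j lam ^ (p₁ / p₂) := by
  have hp₂ := hp₁.trans_le hp
  refine (mNorm_le_iff hp₂).2 fun ν hν k hk => ?_
  calc ∑' m : {m // cubeSub d j ν m k}, ‖r m‖ₑ ^ p₂
      ≤ ∑' m : {m // cubeSub d j ν m k}, B ^ (p₂ - p₁) * ‖lam m‖ₑ ^ p₁ := by
        refine ENNReal.tsum_le_tsum fun m => ?_
        obtain ⟨hrlam, hrB⟩ := hr m (inUnitCube_of_cubeSub hν hk m.2)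
        calc ‖r m‖ₑ ^ p₂ = ‖r m‖ₑ ^ (p₂ - p₁) * ‖r m‖ₑ ^ p₁ := by
              rw [← ENNReal.rpow_add_of_nonneg _ _ (sub_nonneg.2 hp) hp₁.le, sub_add_cancel]
          _ ≤ B ^ (p₂ - p₁) * ‖lam m‖ₑ ^ p₁ := by gcongr
    _ ≤ B ^ (p₂ - p₁) *
          (mNorm d u p₁ j lam ^ p₁ * 2 ^ (d * ((j : ℝ) - ν) * (1 - p₁ / u))) := by
        rw [ENNReal.tsum_mul_left]
        gcongr
        exact tsum_cube_le hp₁ hν hk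
    _ = (B ^ (1 - p₁ / p₂) * mNorm d u p₁ j lam ^ (p₁ / p₂)) ^ p₂ *
          2 ^ (d * ((j : ℝ) - ν) * (1 - p₂ / (u * p₂ / p₁))) := by
        rw [ENNReal.mul_rpow_of_nonneg _ _ hp₂.le, ← ENNReal.rpow_mul, ← ENNReal.rpow_mul,
          div_mul_cancel₀ _ hp₂.ne', sub_mul, div_mul_cancel₀ _ hp₂.ne', one_mul, mul_assoc (B ^ _),
          show p₂ / (u * p₂ / p₁) = p₁ / u by field_simp]

end MorreyNorm

section SequenceNorm

variable {d : ℕ} {σ u p : ℝ} {q : ℝ≥0∞} {lam : ℕ → (Fin d → ℤ) → ℂ}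

lemma level_le_nNorm (hq : 0 < q) (j : ℕ) :
    2 ^ (j * (σ - d / u)) * mNorm d u p j (lam j) ≤ nNorm d σ u p q lam := by
  unfold nNorm
  split_ifs with h
  · exact le_iSup (fun j : ℕ => (2 : ℝ≥0∞) ^ (j * (σ - d / u)) * mNorm d u p j (lam j)) j
  · rw [one_div, ENNReal.le_rpow_inv_iff (ENNReal.toReal_pos hq.ne' h)]
    exact ENNReal.le_tsum
      (f := fun j : ℕ => ((2 : ℝ≥0∞) ^ (j * (σ - d / u)) * mNorm d u p j (lam j)) ^ q.toReal) j

lemma nNorm_le_of_forall_ne (hq : 0 < q) (hp : 0 < p) {j : ℕ} (h : ∀ i ≠ j, lam i = 0) :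
    nNorm d σ u p q lam ≤ 2 ^ (j * (σ - d / u)) * mNorm d u p j (lam j) := by
  unfold nNorm
  split_ifs with hq'
  · refine iSup_le fun i => ?_
    rcases eq_or_ne i j with rfl | hi
    · rfl
    · simp [h i hi, mNorm_zero hp]
  · have hq0 : 0 < q.toReal := ENNReal.toReal_pos hq.ne' hq'
    rw [tsum_eq_single j fun i hi => by simp [h i hi, mNorm_zero hp, hq0], ← ENNReal.rpow_mul,
      mul_one_div_cancel hq0.ne', ENNReal.rpow_one]

lemma tsum_two_rpow_neg_ne_top {s : ℝ} (hs : 0 < s) : ∑' j : ℕ, (2 : ℝ≥0∞) ^ (-(s * j)) ≠ ⊤ := by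
  have hgeo (j : ℕ) : (2 : ℝ≥0∞) ^ (-(s * j)) = (2 ^ (-s)) ^ j := by
    rw [← ENNReal.rpow_mul_natCast, neg_mul]
  have hlt : (2 : ℝ≥0∞) ^ (-s) < 1 :=
    ENNReal.rpow_lt_one_of_one_lt_of_neg ENNReal.one_lt_two (neg_lt_zero.2 hs)
  simpa [hgeo, ENNReal.tsum_geometric, tsub_eq_zero_iff_le] using hlt

lemma exists_nNorm_le {δ : ℝ} (hδ : 0 < δ) (hq : 0 < q) :
    ∃ C : ℝ≥0, ∀ (lam : ℕ → (Fin d → ℤ) → ℂ) (X : ℝ≥0∞),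
      (∀ j : ℕ, 2 ^ (j * (σ - d / u)) * mNorm d u p j (lam j) ≤ X * 2 ^ (-(δ * j))) →
      nNorm d σ u p q lam ≤ C * X := by
  by_cases hq' : q = ∞
  · refine ⟨1, fun lam X hX => ?_⟩
    simp only [nNorm, hq', if_true, ENNReal.coe_one, one_mul]
    refine iSup_le fun j => (hX j).trans (mul_le_of_le_one_right' ?_)
    calc (2 : ℝ≥0∞) ^ (-(δ * j)) ≤ 2 ^ (0 : ℝ) :=
          two_rpow_le_two_rpow (neg_nonpos.2 (by positivity))
      _ = 1 := ENNReal.rpow_zero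
  · have hs : 0 < q.toReal := ENNReal.toReal_pos hq.ne' hq'
    obtain ⟨C, hC⟩ : ∃ C : ℝ≥0, (C : ℝ≥0∞) =
        (∑' j : ℕ, (2 : ℝ≥0∞) ^ (-(δ * q.toReal * j))) ^ (1 / q.toReal) :=
      WithTop.ne_top_iff_exists.1 (ENNReal.rpow_ne_top_of_nonneg (by positivity)
        (tsum_two_rpow_neg_ne_top (mul_pos hδ hs)))
    refine ⟨C, fun lam X hX => ?_⟩
    simp only [nNorm, hq', if_false]
    calc (∑' j : ℕ, (2 ^ (j * (σ - d / u)) * mNorm d u p j (lam j)) ^ q.toReal) ^ (1 / q.toReal)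
        ≤ (∑' j : ℕ, X ^ q.toReal * 2 ^ (-(δ * q.toReal * j))) ^ (1 / q.toReal) := by
          gcongr with j
          refine (ENNReal.rpow_le_rpow (hX j) hs.le).trans_eq ?_
          rw [ENNReal.mul_rpow_of_nonneg _ _ hs.le, ← ENNReal.rpow_mul]
          ring_nf
      _ = C * X := by
          rw [hC, ENNReal.tsum_mul_left, ENNReal.mul_rpow_of_nonneg _ _ (by positivity),
            ← ENNReal.rpow_mul, mul_one_div_cancel hs.ne', ENNReal.rpow_one, mul_comm]

end SequenceNorm

section Rates

variable {e : ℕ → ℝ≥0∞} {T s K C : ℝ}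

lemma two_rpow_mul_eq_rpow (hT : 0 < T) (x : ℝ) :
    (2 : ℝ) ^ (-(x * s)) = (2 ^ (x * T)) ^ (-(s / T)) := by
  rw [← Real.rpow_mul two_pos.le]
  congr 1
  field_simp

lemma exists_const_mul_rpow_le (hT : 0 < T) (hs : 0 ≤ s) (hK : 1 ≤ K) (hC : 0 < C)
    (h : ∀ j k : ℕ, 0 < k → K * k ≤ 2 ^ (j * T) → ENNReal.ofReal (C * 2 ^ (-(j * s))) ≤ e k) :
    ∃ c : ℝ, 0 < c ∧ ∀ k : ℕ, 0 < k → ENNReal.ofReal (c * (k : ℝ) ^ (-(s / T))) ≤ e k := by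
  refine ⟨C * (2 ^ T * K) ^ (-(s / T)), by positivity, fun k hk => ?_⟩
  have hk1 : (1 : ℝ) ≤ k := by exact_mod_cast hk
  obtain ⟨n, hn, hn'⟩ := exists_nat_pow_near (one_le_mul_of_one_le_of_one_le hK hk1)
    (Real.one_lt_rpow one_lt_two hT)
  have hpow (n : ℕ) : ((2 : ℝ) ^ T) ^ n = 2 ^ (n * T) := by
    rw [← Real.rpow_mul_natCast two_pos.le, mul_comm]
  rw [hpow] at hn'
  refine le_trans (ENNReal.ofReal_le_ofReal ?_) (h (n + 1) k hk hn'.le)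
  rw [two_rpow_mul_eq_rpow hT, ← hpow, pow_succ', mul_assoc,
    ← Real.mul_rpow (by positivity) (by positivity)]
  refine mul_le_mul_of_nonneg_left ?_ hC.le
  refine Real.rpow_le_rpow_of_nonpos (by positivity) ?_ (neg_nonpos.2 (by positivity))
  rw [mul_assoc]
  gcongr

lemma exists_le_const_mul_rpow (hT : 0 < T) (hs : 0 ≤ s) (hK : 0 < K) (hC : 0 < C)
    (h : ∀ J k : ℕ, 0 < k → (J ≠ 0 → K * 2 ^ (J * T) ≤ k) →
      e k ≤ ENNReal.ofReal (C * 2 ^ (-(J * s)))) :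
    ∃ c : ℝ, 0 < c ∧ ∀ k : ℕ, 0 < k → e k ≤ ENNReal.ofReal (c * (k : ℝ) ^ (-(s / T))) := by
  refine ⟨C * (2 ^ T * K)⁻¹ ^ (-(s / T)), by positivity, fun k hk => ?_⟩
  have hT1 : (1 : ℝ) < 2 ^ T := Real.one_lt_rpow one_lt_two hT
  obtain ⟨n, hn, hn'⟩ := exists_nat_pow_near (le_max_left 1 (k / K : ℝ)) hT1
  have hpow (n : ℕ) : ((2 : ℝ) ^ T) ^ n = 2 ^ (n * T) := by
    rw [← Real.rpow_mul_natCast two_pos.le, mul_comm]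
  refine (h n k hk fun hn0 => ?_).trans (ENNReal.ofReal_le_ofReal ?_)
  · have hk_le := (le_max_iff.1 hn).resolve_left (one_lt_pow₀ hT1 hn0).not_ge
    rwa [hpow, le_div_iff₀' hK] at hk_le
  · rw [two_rpow_mul_eq_rpow hT, ← hpow, mul_assoc, ← Real.mul_rpow (by positivity) (by positivity)]
    refine mul_le_mul_of_nonneg_left ?_ hC.le
    refine Real.rpow_le_rpow_of_nonpos (by positivity) ?_ (neg_nonpos.2 (by positivity))
    have hk_lt := (max_lt_iff.1 hn').2
    rw [div_lt_iff₀ hK, pow_succ'] at hk_lt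
    rw [inv_mul_le_iff₀ (by positivity)]
    linarith

lemma exists_sq_le_mul_two_rpow {δ : ℝ} (hδ : 0 < δ) :
    ∃ C : ℝ, ∀ J : ℕ, (J : ℝ) ^ 2 ≤ C * 2 ^ (J * δ) := by
  have hO := (isLittleO_pow_const_const_pow_of_one_lt (R := ℝ) 2
    (Real.one_lt_rpow one_lt_two hδ)).isBigO
  obtain ⟨C, hC⟩ := (Asymptotics.isBigO_nat_atTop_iff fun n hn => absurd hn (by positivity)).1 hO
  refine ⟨C, fun J => ?_⟩
  have := hC J
  rwa [Real.norm_of_nonneg (by positivity), Real.norm_of_nonneg (by positivity),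
    ← Real.rpow_mul_natCast two_pos.le, mul_comm δ] at this

lemma exists_mul_sq_mul_floor_le {δ : ℝ} (hT : 0 ≤ T) (hδ : 0 < δ) (A : ℕ) :
    ∃ K : ℝ, 0 < K ∧ ∀ J k : ℕ, K * 2 ^ (J * (T + δ)) ≤ k →
      A * J ^ 2 * ⌊(2 : ℝ) ^ (J * T)⌋₊ ≤ k - 1 := by
  obtain ⟨C, hC⟩ := exists_sq_le_mul_two_rpow hδ
  have hC0 : 0 ≤ C := by simpa using hC 0
  refine ⟨A * C + 1, by positivity, fun J k hk => Nat.le_sub_one_of_lt (Nat.lt_iff_add_one_le.2 ?_)⟩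
  have hone : (1 : ℝ) ≤ 2 ^ (J * (T + δ)) := Real.one_le_rpow one_le_two (by positivity)
  suffices h : (A * J ^ 2 * ⌊(2 : ℝ) ^ (J * T)⌋₊ + 1 : ℝ) ≤ k by exact_mod_cast h
  calc (A * J ^ 2 * ⌊(2 : ℝ) ^ (J * T)⌋₊ + 1 : ℝ)
      ≤ A * (C * 2 ^ (J * δ)) * 2 ^ (J * T) + 2 ^ (J * (T + δ)) := by
        gcongr
        · exact hC J
        · exact Nat.floor_le (by positivity)
    _ = (A * C + 1) * 2 ^ (J * (T + δ)) := by
        rw [mul_add (J : ℝ), Real.rpow_add two_pos]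
        ring
    _ ≤ k := hk

lemma exists_le_sub_div_add {D T β : ℝ} (hD : 0 < D) (hT : 0 < T) (hβ : β < D / T) :
    ∃ δ, 0 < δ ∧ δ ≤ D ∧ β ≤ (D - δ) / (T + δ) := by
  have hcont : ContinuousAt (fun δ => (D - δ) / (T + δ)) 0 :=
    ContinuousAt.div (by fun_prop) (by fun_prop) (by simpa using hT.ne')
  have hlim : ∀ᶠ δ in nhds 0, β < (D - δ) / (T + δ) :=
    hcont.eventually (lt_mem_nhds (by simpa using hβ))
  obtain ⟨δ, hβδ, hδ⟩ :=
    ((hlim.filter_mono nhdsWithin_le_nhds).and (Ioc_mem_nhdsGT hD)).exists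
  exact ⟨δ, hδ.1, hδ.2, hβδ.le⟩

end Rates

noncomputable section LowerBound

variable {d : ℕ} {σ σ1 σ2 u p u1 p1 u2 p2 : ℝ} {q q1 q2 : ℝ≥0∞}

/-- The dimension `d (1 - p / u)` of the extremal sets for the Morrey condition: a set of dyadic
cubes of side length `2 ^ (-j)` saturating it has about `2 ^ (j * morreyDim d u p)` elements. -/
def morreyDim (d : ℕ) (u p : ℝ) : ℝ := d * (1 - p / u)

/-- The amount `σ1 - σ2 - d (p1 / u1) (1 / p1 - 1 / p2)` by which the smoothness gap exceeds its
critical value: the part of the embedding on level `j` has norm about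
`2 ^ (-j * smoothnessExcess d σ1 σ2 u1 p1 p2)`. -/
def smoothnessExcess (d : ℕ) (σ1 σ2 u1 p1 p2 : ℝ) : ℝ :=
  σ1 - σ2 - d * (p1 / u1 * (1 / p1 - 1 / p2))

lemma two_rpow_le_mNorm (hp : 0 < p) {j : ℕ} {lam : (Fin d → ℤ) → ℂ} {F : Finset (Fin d → ℤ)}
    {s t : ℝ} (hcard : (2 : ℝ≥0∞) ^ s ≤ #F)
    (hF : ∀ m ∈ F, inUnitCube d j m ∧ 2 ^ t ≤ ‖lam m‖ₑ) :
    2 ^ (s / p + t - d * j * (1 / p - 1 / u)) ≤ mNorm d u p j lam := by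
  have hcheb : (2 : ℝ≥0∞) ^ s * (2 ^ t) ^ p ≤
      2 ^ (d * (j : ℝ) * (1 - p / u)) * mNorm d u p j lam ^ p := by
    rw [mul_comm (2 ^ (d * (j : ℝ) * (1 - p / u)))]
    exact (mul_le_mul_left hcard _).trans (card_mul_rpow_le_mNorm hp hF)
  rw [← ENNReal.rpow_le_rpow_iff hp]
  calc ((2 : ℝ≥0∞) ^ (s / p + t - d * j * (1 / p - 1 / u))) ^ p
      = 2 ^ (-(d * (j : ℝ) * (1 - p / u))) * (2 ^ s * (2 ^ t) ^ p) := by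
        rw [← ENNReal.rpow_mul, ← ENNReal.rpow_mul, ← two_rpow_add, ← two_rpow_add]
        congr 1
        field_simp
        ring
    _ ≤ mNorm d u p j lam ^ p := by rwa [two_rpow_mul_le_iff, neg_neg]

open scoped Classical in
lemma nNorm_single_indicator_le_one (hq : 0 < q) (hp : 0 < p) {j : ℕ}
    {S b : Finset (Fin d → ℤ)} (hbS : b ⊆ S)
    (hS : ∀ ν ≤ j, ∀ k, (#{m ∈ S | cubeSub d j ν m k} : ℝ≥0∞) ≤
      2 ^ (d * ((j : ℝ) - ν) * (1 - p / u)))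
    {a : ℂ} (ha : ‖a‖ₑ ≤ 2 ^ (-(j * (σ - d / u)))) :
    nNorm d σ u p q (Pi.single j fun m => if m ∈ b then a else 0) ≤ 1 := by
  refine (nNorm_le_of_forall_ne hq hp fun i hi => Pi.single_eq_of_ne hi _).trans ?_
  rw [Pi.single_eq_same, two_rpow_mul_le_iff, mul_one]
  refine mNorm_le_of_card_le hp hS (fun m => ?_) fun m hm => if_neg fun hmb => hm (hbS hmb)
  split_ifs
  · exact ha
  · simp

open scoped Classical in
lemma exists_saturating_cubes (hp : 0 < p) (hpu : p ≤ u) (j : ℕ) :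
    ∃ S : Finset (Fin d → ℤ), (∀ m ∈ S, inUnitCube d j m) ∧
      (2 : ℝ) ^ (j * morreyDim d u p - d) ≤ #S ∧
      ∀ ν ≤ j, ∀ k, (#{m ∈ S | cubeSub d j ν m k} : ℝ≥0∞) ≤
        2 ^ (d * ((j : ℝ) - ν) * (1 - p / u)) := by
  have hu : 0 < u := hp.trans_le hpu
  obtain ⟨S, hcube, hcard, hsparse⟩ := exists_cubes_card_le (d := d) (θ := 1 - p / u)
    (sub_nonneg.2 ((div_le_one hu).2 hpu)) (sub_le_self 1 (by positivity)) j
  refine ⟨S, hcube, hcard.trans_eq' ?_, hsparse⟩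
  rw [morreyDim]
  ring_nf

lemma exists_forall_two_rpow_le_mNorm_sub [DecidableEq (Fin d → ℤ)] (hp : 0 < p) {j k : ℕ}
    (hk : 0 < k) {S : Finset (Fin d → ℤ)} (hS : ∀ m ∈ S, inUnitCube d j m)
    (hkS : (2 * k : ℝ) ≤ #S) {s t : ℝ} (hsS : (2 : ℝ) ^ s ≤ #S) {a : ℂ} (ha : ‖a‖ = 2 ^ t)
    (c : Fin (2 ^ (k - 1)) → (Fin d → ℤ) → ℂ) :
    ∃ b ⊆ S, ∀ i, 2 ^ ((s - 4) / p + (t - 1) - d * j * (1 / p - 1 / u)) ≤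
      mNorm d u p j ((fun m => if m ∈ b then a else 0) - c i) := by
  have hSne : S.Nonempty := by
    rw [← card_pos, ← Nat.cast_pos (α := ℝ)]
    exact lt_of_lt_of_le (by positivity) hkS
  have hK : ((2 ^ (k - 1) : ℕ) : ℝ) ≤ 2 ^ (#S / 2 : ℝ) := by
    rw [Nat.cast_pow, Nat.cast_ofNat, ← Real.rpow_natCast]
    refine Real.rpow_le_rpow_of_exponent_le one_le_two ?_
    have : ((k - 1 : ℕ) : ℝ) ≤ k := by exact_mod_cast k.sub_le 1
    linarith
  obtain ⟨b, hbS, hfar⟩ := exists_forall_card_div_lt_card_far hSne hK a c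
  refine ⟨b, hbS, fun i => two_rpow_le_mNorm hp
    (F := {m ∈ S | ‖a‖ / 2 ≤ ‖(if m ∈ b then a else 0) - c i m‖}) ?_ fun m hm => ?_⟩
  · rw [two_rpow_eq_ofReal, ENNReal.ofReal_le_natCast]
    calc (2 : ℝ) ^ (s - 4) = 2 ^ s / 16 := by rw [Real.rpow_sub two_pos]; norm_num
      _ ≤ #S / 16 := by gcongr
      _ ≤ _ := (hfar i).le
  · obtain ⟨hmS, hm⟩ := mem_filter.1 hm
    refine ⟨hS m hmS, ?_⟩
    rw [two_rpow_eq_ofReal, ← ofReal_norm, Real.rpow_sub_one two_ne_zero, ← ha]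
    exact ENNReal.ofReal_le_ofReal hm

lemma two_rpow_le_entropyNumber (hq1 : 0 < q1) (hq2 : 0 < q2) (hp1 : 0 < p1) (hpu : p1 ≤ u1)
    (hp2 : 0 < p2) {j k : ℕ} (hk : 0 < k)
    (hjk : (2 : ℝ) ^ (d + 1) * k ≤ 2 ^ (j * morreyDim d u1 p1)) :
    2 ^ (-(j * smoothnessExcess d σ1 σ2 u1 p1 p2) - (1 + (d + 4) / p2)) ≤
      entropyNumber (nNorm d σ1 u1 p1 q1) (nNorm d σ2 u2 p2 q2) k := by
  classical
  have hu1 : 0 < u1 := hp1.trans_le hpu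
  obtain ⟨S, hcube, hcard, hsparse⟩ := exists_saturating_cubes (d := d) hp1 hpu j
  have hkS : (2 * k : ℝ) ≤ #S := by
    refine le_trans ?_ hcard
    rw [Real.rpow_sub two_pos, le_div_iff₀ (by positivity), Real.rpow_natCast]
    exact hjk.trans_eq' (by ring)
  set w : ℝ := j * (σ1 - d / u1) with hw
  set a : ℂ := ((2 ^ (-w) : ℝ) : ℂ) with ha
  have ha_norm : ‖a‖ = 2 ^ (-w) := by
    rw [ha, Complex.norm_real, Real.norm_of_nonneg (by positivity)]
  have ha_enorm : ‖a‖ₑ = 2 ^ (-w) := by rw [← ofReal_norm, ha_norm, two_rpow_eq_ofReal]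
  refine le_entropyNumber_of_forall_centers fun c => ?_
  obtain ⟨b, hbS, hfar⟩ := exists_forall_two_rpow_le_mNorm_sub (u := u2) hp2 hk hcube hkS hcard
    ha_norm fun i => c i j
  refine ⟨_, nNorm_single_indicator_le_one hq1 hp1 hbS hsparse ha_enorm.le, fun i => ?_⟩
  refine le_trans ?_ (level_le_nNorm hq2 j)
  rw [Pi.sub_apply, Pi.single_eq_same]
  refine le_trans (le_of_eq ?_) (mul_le_mul_right (hfar i) _)
  rw [← two_rpow_add, hw, smoothnessExcess, morreyDim]
  congr 1
  field_simp
  ring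

theorem exists_const_mul_rpow_le_entropyNumber (hq1 : 0 < q1) (hq2 : 0 < q2) (hp1 : 0 < p1)
    (hp2 : 0 < p2) (hpu : p1 ≤ u1) (hT : 0 < morreyDim d u1 p1)
    (hD : 0 ≤ smoothnessExcess d σ1 σ2 u1 p1 p2) :
    ∃ c : ℝ, 0 < c ∧ ∀ k : ℕ, 0 < k →
      ENNReal.ofReal (c * (k : ℝ) ^ (-(smoothnessExcess d σ1 σ2 u1 p1 p2 / morreyDim d u1 p1))) ≤
        entropyNumber (nNorm d σ1 u1 p1 q1) (nNorm d σ2 u2 p2 q2) k := by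
  refine exists_const_mul_rpow_le hT hD (K := 2 ^ (d + 1)) (C := 2 ^ (-(1 + (d + 4) / p2)))
    (one_le_pow₀ one_le_two) (by positivity) fun j k hk hjk => ?_
  refine (two_rpow_le_entropyNumber hq1 hq2 hp1 hpu hp2 hk hjk).trans_eq' ?_
  rw [two_rpow_eq_ofReal, ← Real.rpow_add two_pos]
  ring_nf

end LowerBound

noncomputable section Quantization

open scoped Classical in
lemma exists_finset_sparse {β γ : Type*} [Zero γ] {P : Finset β} (hP : P.Nonempty)
    (G : Finset γ) (n : ℕ) :
    ∃ F : Finset (β → γ), #F ≤ (#P * #G) ^ n ∧ ∀ f : β → γ, (∀ b ∈ P, f b ∈ G) →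
      (∀ b ∉ P, f b = 0) → #{b ∈ P | f b ≠ 0} ≤ n → f ∈ F := by
  refine ⟨(Fintype.piFinset fun _ : Fin n => P ×ˢ G).image fun e =>
    Function.extend (Prod.fst ∘ e) (Prod.snd ∘ e) 0, card_image_le.trans_eq (by simp), ?_⟩
  intro f hfG hf0 hfn
  obtain ⟨g, hgP, hg⟩ := exists_fin_covering (P := (P : Set β)) hP
    (coe_subset.2 (filter_subset _ _)) hfn
  refine mem_image.2 ⟨fun i => (g i, f (g i)), Fintype.mem_piFinset.2 fun i =>
    mem_product.2 ⟨hgP i, hfG _ (hgP i)⟩, funext fun b => ?_⟩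
  have hfactor : Function.FactorsThrough (f ∘ g) g := fun _ _ h => congrArg f h
  by_cases hb : ∃ i, g i = b
  · obtain ⟨i, rfl⟩ := hb
    exact hfactor.extend_apply 0 i
  · refine (Function.extend_apply' _ _ _ hb).trans ?_
    by_contra hfb
    have hbP : b ∈ P := by_contra fun hbP => hfb (hf0 b hbP).symm
    exact hb (hg b (mem_filter.2 ⟨hbP, fun h => hfb h.symm⟩))

lemma exists_finset_truncated {X : Type*} [Zero X] (F : ℕ → Finset X) (J : ℕ) :
    ∃ 𝓢 : Finset (ℕ → X), #𝓢 ≤ ∏ j ∈ range J, #(F j) ∧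
      ∀ y : ℕ → X, (∀ j < J, y j ∈ F j) → (∀ j ≥ J, y j = 0) → y ∈ 𝓢 := by
  classical
  refine ⟨((range J).pi F).image fun e j => if h : j ∈ range J then e j h else 0,
    card_image_le.trans_eq (card_pi _ _), fun y hyF hy0 => ?_⟩
  refine mem_image.2 ⟨fun j _ => y j, mem_pi.2 fun j hj => hyF j (mem_range.1 hj),
    funext fun j => ?_⟩
  by_cases hj : j ∈ range J
  · simp only [hj, dif_pos]
  · simpa only [hj, dif_neg, not_false_iff] using (hy0 j (not_lt.1 (mem_range.not.1 hj))).symm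

/-- A point of the lattice `t (ℤ + iℤ)` closest to `z`, with ties rounded up in each coordinate: the
quantization of a single coefficient with mesh `t`. -/
def gridRound (t : ℝ) (z : ℂ) : ℂ := ⟨t * round (z.re / t), t * round (z.im / t)⟩

/-- The points `t (a + ib)` with integers `|a|, |b| ≤ R`, the possible values of a quantized
coefficient of size at most `t R`. -/
def grid (t : ℝ) (R : ℕ) : Finset ℂ :=
  (Icc (-R : ℤ) R ×ˢ Icc (-R : ℤ) R).image fun ab => ⟨t * ab.1, t * ab.2⟩

lemma card_grid_le (t : ℝ) (R : ℕ) : #(grid t R) ≤ (2 * R + 1) ^ 2 := by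
  refine card_image_le.trans_eq ?_
  rw [card_product, Int.card_Icc, sq]
  congr 1 <;> omega

variable {t : ℝ} {z : ℂ}

lemma sub_mul_round_div (ht : 0 < t) (x : ℝ) :
    |x - t * round (x / t)| = t * |x / t - round (x / t)| := by
  rw [← abs_of_pos ht, ← abs_mul, abs_of_pos ht, mul_sub, mul_div_cancel₀ _ ht.ne']

lemma norm_sub_gridRound_le_norm (ht : 0 < t) : ‖z - gridRound t z‖ ≤ ‖z‖ := by
  have hcoord (x : ℝ) : (x - t * round (x / t)) ^ 2 ≤ x ^ 2 := by
    refine sq_le_sq.2 ?_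
    calc |x - t * round (x / t)| = t * |x / t - round (x / t)| := sub_mul_round_div ht x
      _ ≤ t * |x / t| := by
        have := round_le (x / t) 0
        rw [Int.cast_zero, sub_zero] at this
        gcongr
      _ = |x| := by rw [abs_div, abs_of_pos ht, mul_div_cancel₀ _ ht.ne']
  rw [Complex.norm_eq_sqrt_sq_add_sq, Complex.norm_eq_sqrt_sq_add_sq]
  exact Real.sqrt_le_sqrt (add_le_add (hcoord z.re) (hcoord z.im))

lemma norm_sub_gridRound_le (ht : 0 < t) : ‖z - gridRound t z‖ ≤ t := by
  have hcoord (x : ℝ) : |x - t * round (x / t)| ≤ t * (1 / 2) := by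
    rw [sub_mul_round_div ht]
    gcongr
    exact abs_sub_round _
  calc ‖z - gridRound t z‖ ≤ t * (1 / 2) + t * (1 / 2) :=
        (Complex.norm_le_abs_re_add_abs_im _).trans (add_le_add (hcoord z.re) (hcoord z.im))
    _ = t := by ring

lemma le_norm_of_gridRound_ne_zero (ht : 0 < t) (hz : gridRound t z ≠ 0) : t / 2 ≤ ‖z‖ := by
  contrapose! hz
  have hcoord {x : ℝ} (hx : |x| ≤ ‖z‖) : t * round (x / t) = 0 := by
    obtain ⟨hlow, hupp⟩ := abs_lt.1 (hx.trans_lt hz)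
    have : round (x / t) = 0 := by
      rw [round_eq_zero_iff, Set.mem_Ico, le_div_iff₀ ht, div_lt_iff₀ ht]
      constructor <;> linarith
    rw [this, Int.cast_zero, mul_zero]
  exact Complex.ext (hcoord (Complex.abs_re_le_norm z)) (hcoord (Complex.abs_im_le_norm z))

lemma gridRound_mem_grid (ht : 0 < t) {R : ℕ} (hz : ‖z‖ ≤ t * R) : gridRound t z ∈ grid t R := by
  have hcoord {x : ℝ} (hx : |x| ≤ ‖z‖) : round (x / t) ∈ Icc (-R : ℤ) R := by
    obtain ⟨hlow, hupp⟩ := abs_le.1 (hx.trans hz)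
    have hhalf := abs_le.1 (abs_sub_round (x / t))
    rw [mem_Icc, ← Int.lt_add_one_iff, ← Int.sub_one_lt_iff]
    have hlow' : (-R : ℝ) ≤ x / t := by rw [le_div_iff₀ ht]; linarith
    have hupp' : x / t ≤ R := by rw [div_le_iff₀ ht]; linarith
    constructor <;> rify <;> linarith
  exact mem_image.2 ⟨(round (z.re / t), round (z.im / t)), mem_product.2
    ⟨hcoord (Complex.abs_re_le_norm z), hcoord (Complex.abs_im_le_norm z)⟩, rfl⟩

variable {d : ℕ}

/-- The finite set of all `m` with `Q_{j,m} ⊆ Q`, for counting; see `inUnitCube`. -/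
def unitCubes (d j : ℕ) : Finset (Fin d → ℤ) := Fintype.piFinset fun _ => Ico 0 (2 ^ j)

lemma mem_unitCubes {j : ℕ} {m : Fin d → ℤ} : m ∈ unitCubes d j ↔ inUnitCube d j m := by
  simp [unitCubes, inUnitCube]

lemma card_unitCubes (j : ℕ) : #(unitCubes d j) = (2 ^ j) ^ d := by
  rw [unitCubes, Fintype.card_piFinset_const, Int.card_Ico, sub_zero]
  exact congrArg (· ^ d) (by exact_mod_cast Int.toNat_natCast (2 ^ j))

lemma mul_sq_pow_le_two_pow (d B n J : ℕ) :
    ((2 ^ J) ^ d * (2 * 2 ^ (J * B) + 1) ^ 2) ^ (n * J) ≤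
      2 ^ ((d + 2 * B + 4) * J ^ 2 * n) := by
  have hR : 2 * 2 ^ (J * B) + 1 ≤ 2 ^ (J * B + 2) := by
    have := Nat.one_le_two_pow (n := J * B)
    rw [pow_add]
    omega
  calc ((2 ^ J) ^ d * (2 * 2 ^ (J * B) + 1) ^ 2) ^ (n * J)
      ≤ ((2 ^ J) ^ d * (2 ^ (J * B + 2)) ^ 2) ^ (n * J) := by gcongr
    _ = 2 ^ (((d + 2 * B) * J ^ 2 + 4 * J) * n) := by
        rw [← pow_mul, ← pow_mul, ← pow_add, ← pow_mul]
        ring_nf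
    _ ≤ 2 ^ ((d + 2 * B + 4) * J ^ 2 * n) := by
        rw [add_mul _ 4]
        gcongr
        · exact one_le_two
        · exact Nat.le_self_pow two_ne_zero J

lemma exists_finset_quantized (J n R : ℕ) {s : ℕ → ℝ} (hs : ∀ j, 0 < s j) :
    ∃ 𝓢 : Finset (ℕ → (Fin d → ℤ) → ℂ), #𝓢 ≤ ((2 ^ J) ^ d * (2 * R + 1) ^ 2) ^ (n * J) ∧
      ∀ x : ℕ → (Fin d → ℤ) → ℂ,
        (∀ j < J, (∀ m ∈ unitCubes d j, ‖x j m‖ ≤ s j * R) ∧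
          #{m ∈ unitCubes d j | s j / 2 ≤ ‖x j m‖} ≤ n) →
        ∃ y ∈ 𝓢, (∀ j < J, ∀ m ∈ unitCubes d j,
          ‖x j m - y j m‖ ≤ ‖x j m‖ ∧ ‖x j m - y j m‖ ≤ s j) ∧ ∀ j ≥ J, y j = 0 := by
  classical
  have hne (j : ℕ) : (unitCubes d j).Nonempty := by
    rw [← card_pos, card_unitCubes]
    positivity
  choose F hFcard hF using fun j => exists_finset_sparse (hne j) (grid (s j) R) n
  obtain ⟨𝓢, h𝓢card, h𝓢⟩ := exists_finset_truncated F J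
  refine ⟨𝓢, h𝓢card.trans ?_, fun x hx => ?_⟩
  · calc ∏ j ∈ range J, #(F j)
        ≤ ∏ j ∈ range J, ((2 ^ J) ^ d * (2 * R + 1) ^ 2) ^ n := by
          refine prod_le_prod' fun j hj => (hFcard j).trans ?_
          rw [card_unitCubes]
          gcongr
          · exact one_le_two
          · exact (mem_range.1 hj).le
          · exact card_grid_le _ _
      _ = ((2 ^ J) ^ d * (2 * R + 1) ^ 2) ^ (n * J) := by rw [prod_const, card_range, pow_mul]
  · refine ⟨fun j m => if j < J ∧ m ∈ unitCubes d j then gridRound (s j) (x j m) else 0,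
      h𝓢 _ (fun j hj => hF j _ (fun m hm => ?_) (fun m hm => ?_) ?_) fun j hj => ?_,
      fun j hj m hm => ?_, fun j hj => ?_⟩
    · rw [if_pos ⟨hj, hm⟩]
      exact gridRound_mem_grid (hs j) ((hx j hj).1 m hm)
    · rw [if_neg fun h => hm h.2]
    · refine (card_le_card fun m hm => ?_).trans (hx j hj).2
      obtain ⟨hm, hne0⟩ := mem_filter.1 hm
      rw [if_pos ⟨hj, hm⟩] at hne0
      exact mem_filter.2 ⟨hm, le_norm_of_gridRound_ne_zero (hs j) hne0⟩
    · exact funext fun m => if_neg fun h => hj.not_gt h.1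
    · simp only [hj, hm, and_self, if_true]
      exact ⟨norm_sub_gridRound_le_norm (hs j), norm_sub_gridRound_le (hs j)⟩
    · exact funext fun m => if_neg fun h => hj.not_gt h.1

end Quantization

section UpperBound

variable {d : ℕ} {σ σ1 σ2 u p u1 p1 u2 p2 : ℝ} {q q1 q2 : ℝ≥0∞}

lemma two_rpow_mul_mNorm_le (hp1 : 0 < p1) (hp : p1 ≤ p2) (hu : p1 / (u1 * p2) ≤ 1 / u2)
    {j : ℕ} {lam r : (Fin d → ℤ) → ℂ} {b : ℝ}
    (hlam : mNorm d u1 p1 j lam ≤ 2 ^ (-(j * (σ1 - d / u1))))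
    (hr : ∀ m, inUnitCube d j m →
      ‖r m‖ₑ ≤ ‖lam m‖ₑ ∧ ‖r m‖ₑ ≤ 2 ^ (b - j * (σ1 - d / u1))) :
    2 ^ (j * (σ2 - d / u2)) * mNorm d u2 p2 j r ≤
      2 ^ (b * (1 - p1 / p2) - j * smoothnessExcess d σ1 σ2 u1 p1 p2) := by
  have hp2 := hp1.trans_le hp
  set v := u1 * p2 / p1
  have hv_inv : 1 / v = p1 / (u1 * p2) := one_div_div _ _
  set w : ℝ := j * (σ1 - d / u1) with hw
  calc (2 : ℝ≥0∞) ^ (j * (σ2 - d / u2)) * mNorm d u2 p2 j r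
      ≤ 2 ^ (j * (σ2 - d / u2)) * (2 ^ (d * (j : ℝ) * (1 / u2 - 1 / v)) * mNorm d v p2 j r) := by
        gcongr
        exact mNorm_le_of_inv_le hp2 (hv_inv.trans_le hu)
    _ ≤ 2 ^ (j * (σ2 - d / u2)) * (2 ^ (d * (j : ℝ) * (1 / u2 - 1 / v)) *
          ((2 ^ (b - w)) ^ (1 - p1 / p2) * (2 ^ (-w)) ^ (p1 / p2))) := by
        gcongr
        exact (mNorm_le_interpolation hp1 hp hr).trans (by gcongr)
    _ = 2 ^ (b * (1 - p1 / p2) - j * smoothnessExcess d σ1 σ2 u1 p1 p2) := by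
        rw [← ENNReal.rpow_mul, ← ENNReal.rpow_mul, ← two_rpow_add, ← two_rpow_add,
          ← two_rpow_add, hv_inv, hw, smoothnessExcess]
        congr 1
        field_simp
        ring

lemma card_large_le_floor (hp : 0 < p) {j : ℕ} {lam : (Fin d → ℤ) → ℂ} {w y : ℝ}
    (hlam : mNorm d u p j lam ≤ 2 ^ (-w)) :
    #{m ∈ unitCubes d j | 2 ^ (-w - y * (morreyDim d u p / p)) ≤ ‖lam m‖} ≤
      ⌊(2 : ℝ) ^ ((j + y) * morreyDim d u p)⌋₊ := by
  set F := {m ∈ unitCubes d j | 2 ^ (-w - y * (morreyDim d u p / p)) ≤ ‖lam m‖}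
  have hF : ∀ m ∈ F, inUnitCube d j m ∧
      (2 : ℝ≥0∞) ^ (-w - y * (morreyDim d u p / p)) ≤ ‖lam m‖ₑ := by
    intro m hm
    obtain ⟨hm, hlarge⟩ := mem_filter.1 hm
    refine ⟨mem_unitCubes.1 hm, ?_⟩
    rw [two_rpow_eq_ofReal, ← ofReal_norm]
    exact ENNReal.ofReal_le_ofReal hlarge
  refine Nat.le_floor ?_
  suffices h : (#F : ℝ≥0∞) ≤ 2 ^ ((j + y) * morreyDim d u p) by
    rwa [← ENNReal.ofReal_natCast, two_rpow_eq_ofReal,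
      ENNReal.ofReal_le_ofReal_iff (by positivity)] at h
  have hcheb : 2 ^ ((-w - y * (morreyDim d u p / p)) * p) * (#F : ℝ≥0∞) ≤
      (2 ^ (-w)) ^ p * 2 ^ (j * morreyDim d u p) := by
    rw [mul_comm, ENNReal.rpow_mul, show j * morreyDim d u p = d * (j : ℝ) * (1 - p / u) by
      rw [morreyDim]; ring]
    exact (card_mul_rpow_le_mNorm hp hF).trans (by gcongr)
  refine (two_rpow_mul_le_iff.1 hcheb).trans_eq ?_
  rw [← ENNReal.rpow_mul, ← two_rpow_add, ← two_rpow_add]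
  congr 1
  field_simp
  ring

lemma norm_le_of_mNorm_le (hp : 0 < p) {j : ℕ} {lam : (Fin d → ℤ) → ℂ} {w : ℝ}
    (hlam : mNorm d u p j lam ≤ 2 ^ w) {m : Fin d → ℤ} (hm : inUnitCube d j m) :
    ‖lam m‖ ≤ 2 ^ w := by
  have h := (enorm_le_mNorm hp hm).trans hlam
  rwa [two_rpow_eq_ofReal, ← ofReal_norm, ENNReal.ofReal_le_ofReal_iff (by positivity)] at h

lemma cast_sub_mul_le_mul_ceil (J j : ℕ) (x : ℝ) : (J - j : ℕ) * x ≤ (J * ⌈x⌉₊ : ℕ) :=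
  calc (J - j : ℕ) * x ≤ (J - j : ℕ) * ⌈x⌉₊ := by
        gcongr
        exact Nat.le_ceil x
    _ ≤ (J * ⌈x⌉₊ : ℕ) := by exact_mod_cast Nat.mul_le_mul_right _ (J.sub_le j)

-- On level `j < J` the mesh is `2 ^ (1 - (J - j) T / p - j (σ - d / u))` with
-- `T = morreyDim d u p`, so that at most `2 ^ (J T)` coefficients exceed half of it.
lemma exists_finset_quantized_unitBall (hq : 0 < q) (hp : 0 < p) (J : ℕ) :
    ∃ 𝓢 : Finset (ℕ → (Fin d → ℤ) → ℂ),
      #𝓢 ≤ 2 ^ ((d + 2 * ⌈morreyDim d u p / p⌉₊ + 4) * J ^ 2 *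
        ⌊(2 : ℝ) ^ (J * morreyDim d u p)⌋₊) ∧
      ∀ x, nNorm d σ u p q x ≤ 1 → ∃ y ∈ 𝓢, ∀ j m, inUnitCube d j m →
        ‖(x - y) j m‖ₑ ≤ ‖x j m‖ₑ ∧ ‖(x - y) j m‖ₑ ≤
          2 ^ (1 - (J - j : ℕ) * (morreyDim d u p / p) - j * (σ - d / u)) := by
  set T := morreyDim d u p
  set w : ℕ → ℝ := fun j => j * (σ - d / u)
  set s : ℕ → ℝ := fun j => 2 ^ (1 - (J - j : ℕ) * (T / p) - w j)
  obtain ⟨𝓢, hcard, h𝓢⟩ := exists_finset_quantized (d := d) J ⌊(2 : ℝ) ^ (J * T)⌋₊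
    (2 ^ (J * ⌈T / p⌉₊)) (s := s) fun j => by positivity
  refine ⟨𝓢, hcard.trans (mul_sq_pow_le_two_pow _ _ _ _), fun x hx => ?_⟩
  have hnorm (j : ℕ) : mNorm d u p j (x j) ≤ 2 ^ (-w j) := by
    simpa only [mul_one] using two_rpow_mul_le_iff.1 ((level_le_nNorm hq j).trans hx)
  have hlevel : ∀ j < J, (∀ m ∈ unitCubes d j, ‖x j m‖ ≤ s j * (2 ^ (J * ⌈T / p⌉₊) : ℕ)) ∧
      #{m ∈ unitCubes d j | s j / 2 ≤ ‖x j m‖} ≤ ⌊(2 : ℝ) ^ (J * T)⌋₊ := by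
    refine fun j hj => ⟨fun m hm => ?_, ?_⟩
    · refine (norm_le_of_mNorm_le hp (hnorm j) (mem_unitCubes.1 hm)).trans ?_
      rw [Nat.cast_pow, Nat.cast_ofNat, ← Real.rpow_natCast, ← Real.rpow_add two_pos]
      refine Real.rpow_le_rpow_of_exponent_le one_le_two ?_
      linarith [cast_sub_mul_le_mul_ceil J j (T / p)]
    · have hs_half : s j / 2 = 2 ^ (-w j - (J - j : ℕ) * (T / p)) := by
        rw [← Real.rpow_sub_one two_ne_zero]
        ring_nf
      rw [hs_half, show (J : ℝ) = j + (J - j : ℕ) by exact_mod_cast (Nat.add_sub_of_le hj.le).symm]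
      exact card_large_le_floor hp (hnorm j)
  obtain ⟨y, hy, hlow, hhigh⟩ := h𝓢 x hlevel
  refine ⟨y, hy, fun j m hm => ?_⟩
  rcases lt_or_ge j J with hj | hj
  · obtain ⟨hle, hmesh⟩ := hlow j hj m (mem_unitCubes.2 hm)
    refine ⟨enorm_le_iff_norm_le.2 hle, ?_⟩
    rw [two_rpow_eq_ofReal, ← ofReal_norm]
    exact ENNReal.ofReal_le_ofReal hmesh
  · rw [Pi.sub_apply, hhigh j hj, sub_zero, Nat.sub_eq_zero_of_le hj]
    exact ⟨le_rfl, (enorm_le_mNorm hp hm).trans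
      ((hnorm j).trans (two_rpow_le_two_rpow (by simp [w])))⟩

lemma exists_finset_approx (hq1 : 0 < q1) (hp1 : 0 < p1) (hp : p1 ≤ p2)
    (hu : p1 / (u1 * p2) ≤ 1 / u2)
    (hD : smoothnessExcess d σ1 σ2 u1 p1 p2 ≤ morreyDim d u1 p1 * (1 / p1 - 1 / p2)) (J : ℕ) :
    ∃ 𝓢 : Finset (ℕ → (Fin d → ℤ) → ℂ),
      #𝓢 ≤ 2 ^ ((d + 2 * ⌈morreyDim d u1 p1 / p1⌉₊ + 4) * J ^ 2 *
        ⌊(2 : ℝ) ^ (J * morreyDim d u1 p1)⌋₊) ∧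
      ∀ x, nNorm d σ1 u1 p1 q1 x ≤ 1 → ∃ y ∈ 𝓢, ∀ j : ℕ,
        2 ^ (j * (σ2 - d / u2)) * mNorm d u2 p2 j ((x - y) j) ≤
          2 ^ (1 - smoothnessExcess d σ1 σ2 u1 p1 p2 * (max J j : ℕ)) := by
  obtain ⟨𝓢, hcard, h𝓢⟩ := exists_finset_quantized_unitBall (d := d) (σ := σ1) (u := u1) hq1 hp1 J
  refine ⟨𝓢, hcard, fun x hx => ?_⟩
  obtain ⟨y, hy, hxy⟩ := h𝓢 x hx
  refine ⟨y, hy, fun j => (two_rpow_mul_mNorm_le hp1 hp hu ?_ (hxy j)).trans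
    (two_rpow_le_two_rpow ?_)⟩
  · simpa only [mul_one] using two_rpow_mul_le_iff.1 ((level_le_nNorm hq1 j).trans hx)
  · have hp2 := hp1.trans_le hp
    have hgap := mul_le_mul_of_nonneg_left hD (Nat.cast_nonneg (α := ℝ) (J - j))
    have hcancel : ((J - j : ℕ) : ℝ) * (morreyDim d u1 p1 / p1) * (1 - p1 / p2) =
        (J - j : ℕ) * (morreyDim d u1 p1 * (1 / p1 - 1 / p2)) := by
      field_simp
    have : 0 < p1 / p2 := by positivity
    rw [← tsub_add_eq_max, Nat.cast_add]
    linarith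

lemma exists_entropyNumber_le (hq1 : 0 < q1) (hq2 : 0 < q2) (hp1 : 0 < p1) (hp : p1 ≤ p2)
    (hu : p1 / (u1 * p2) ≤ 1 / u2)
    (hD : smoothnessExcess d σ1 σ2 u1 p1 p2 ≤ morreyDim d u1 p1 * (1 / p1 - 1 / p2))
    {δ : ℝ} (hδ : 0 < δ) (hδD : δ ≤ smoothnessExcess d σ1 σ2 u1 p1 p2) :
    ∃ (A : ℕ) (C : ℝ≥0), ∀ J k : ℕ,
      A * J ^ 2 * ⌊(2 : ℝ) ^ (J * morreyDim d u1 p1)⌋₊ ≤ k - 1 →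
      entropyNumber (nNorm d σ1 u1 p1 q1) (nNorm d σ2 u2 p2 q2) k ≤
        C * 2 ^ (1 - J * (smoothnessExcess d σ1 σ2 u1 p1 p2 - δ)) := by
  obtain ⟨C, hC⟩ := exists_nNorm_le (d := d) (σ := σ2) (u := u2) (p := p2) hδ hq2
  refine ⟨d + 2 * ⌈morreyDim d u1 p1 / p1⌉₊ + 4, C, fun J k hk => ?_⟩
  obtain ⟨𝓢, hcard, h𝓢⟩ := exists_finset_approx hq1 hp1 hp hu hD J
  refine entropyNumber_le_of_card_le (hcard.trans (Nat.pow_le_pow_right two_pos hk)) fun x hx => ?_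
  obtain ⟨y, hy, hxy⟩ := h𝓢 x hx
  refine ⟨y, hy, hC _ _ fun j => (hxy j).trans ?_⟩
  rw [← two_rpow_add]
  refine two_rpow_le_two_rpow ?_
  have hJ : (J : ℝ) ≤ (max J j : ℕ) := by exact_mod_cast le_max_left J j
  have hj : (j : ℝ) ≤ (max J j : ℕ) := by exact_mod_cast le_max_right J j
  have := mul_le_mul_of_nonneg_left hJ (sub_nonneg.2 hδD)
  have := mul_le_mul_of_nonneg_left hj hδ.le
  linarith

theorem exists_entropyNumber_le_const_mul_rpow (hq1 : 0 < q1) (hq2 : 0 < q2) (hp1 : 0 < p1)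
    (hp : p1 ≤ p2) (hu : p1 / (u1 * p2) ≤ 1 / u2) (hT : 0 < morreyDim d u1 p1)
    (hD0 : 0 < smoothnessExcess d σ1 σ2 u1 p1 p2)
    (hD : smoothnessExcess d σ1 σ2 u1 p1 p2 ≤ morreyDim d u1 p1 * (1 / p1 - 1 / p2)) {β : ℝ}
    (hβ : β < smoothnessExcess d σ1 σ2 u1 p1 p2 / morreyDim d u1 p1) :
    ∃ c : ℝ, 0 < c ∧ ∀ k : ℕ, 0 < k →
      entropyNumber (nNorm d σ1 u1 p1 q1) (nNorm d σ2 u2 p2 q2) k ≤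
        ENNReal.ofReal (c * (k : ℝ) ^ (-β)) := by
  obtain ⟨δ, hδ, hδD, hβδ⟩ := exists_le_sub_div_add hD0 hT hβ
  obtain ⟨A, C, hC⟩ := exists_entropyNumber_le hq1 hq2 hp1 hp hu hD hδ hδD
  obtain ⟨K, hK, hbits⟩ := exists_mul_sq_mul_floor_le hT.le hδ A
  have hrate : ∀ J k : ℕ, 0 < k → (J ≠ 0 → K * 2 ^ (J * (morreyDim d u1 p1 + δ)) ≤ k) →
      entropyNumber (nNorm d σ1 u1 p1 q1) (nNorm d σ2 u2 p2 q2) k ≤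
        ENNReal.ofReal ((C + 1) * 2 *
          2 ^ (-(J * (smoothnessExcess d σ1 σ2 u1 p1 p2 - δ)))) := by
    refine fun J k _ hJk => (hC J k ?_).trans ?_
    · rcases eq_or_ne J 0 with rfl | hJ
      · simp
      · exact hbits J k (hJk hJ)
    · rw [two_rpow_eq_ofReal, ← ENNReal.ofReal_coe_nnreal, ← ENNReal.ofReal_mul C.coe_nonneg,
        sub_eq_add_neg 1, Real.rpow_add two_pos, Real.rpow_one, ← mul_assoc]
      gcongr
      exact le_add_of_nonneg_right zero_le_one
  obtain ⟨c, hc, hck⟩ := exists_le_const_mul_rpow (add_pos hT hδ) (sub_nonneg.2 hδD) hK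
    (by positivity) hrate
  refine ⟨c, hc, fun k hk => (hck k hk).trans (ENNReal.ofReal_le_ofReal ?_)⟩
  have : (1 : ℝ) ≤ k := by exact_mod_cast hk
  gcongr

end UpperBound

section Parameters

variable {d : ℕ} {σ1 σ2 u p u1 p1 p2 : ℝ}

lemma morreyDim_pos (hd : 0 < d) (hp : 0 < p) (hpu : p < u) : 0 < morreyDim d u p :=
  mul_pos (by exact_mod_cast hd) (sub_pos.2 ((div_lt_one (hp.trans hpu)).2 hpu))

lemma smoothnessExcess_eq (hd : 0 < d) : smoothnessExcess d σ1 σ2 u1 p1 p2 =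
    d * ((σ1 - σ2) / d - p1 / u1 * (1 / p1 - 1 / p2)) := by
  rw [smoothnessExcess, mul_sub (d : ℝ) ((σ1 - σ2) / d), mul_div_cancel₀ _ (by positivity)]

lemma smoothnessExcess_le (hd : 0 < d) (h : (σ1 - σ2) / d ≤ 1 / p1 - 1 / p2) :
    smoothnessExcess d σ1 σ2 u1 p1 p2 ≤ morreyDim d u1 p1 * (1 / p1 - 1 / p2) := by
  rw [smoothnessExcess_eq hd, morreyDim, mul_assoc, one_sub_mul]
  gcongr

lemma smoothnessExcess_div_morreyDim (hd : 0 < d) (hu : u1 ≠ 0) :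
    smoothnessExcess d σ1 σ2 u1 p1 p2 / morreyDim d u1 p1 =
      u1 / (u1 - p1) * ((σ1 - σ2) / d - p1 / u1 * (1 / p1 - 1 / p2)) := by
  rw [smoothnessExcess_eq hd, morreyDim, mul_div_mul_left _ _ (by positivity),
    one_sub_div hu, div_div_eq_mul_div, mul_comm, mul_div_right_comm]

end Parameters

end Morrey

theorem stmt3_general (d : ℕ) (hd : 1 ≤ d) (σ1 σ2 u1 p1 u2 p2 : ℝ) (q1 q2 : ℝ≥0∞)
    (hq1 : 0 < q1) (hq2 : 0 < q2) (hp1 : 0 < p1) (hp1u1 : p1 ≤ u1) (hp2 : 0 < p2)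
    (h1 : 1 / u1 - 1 / u2 ≤ p1 / u1 * (1 / p1 - 1 / p2))
    (h2 : p1 / u1 * (1 / p1 - 1 / p2) < (σ1 - σ2) / d)
    (h3 : (σ1 - σ2) / d ≤ 1 / p1 - 1 / p2)
    (α : ℝ) (hα : α = u1 / (u1 - p1) * ((σ1 - σ2) / d - p1 / u1 * (1 / p1 - 1 / p2))) :
    (∃ c : ℝ, 0 < c ∧ ∀ k : ℕ, 0 < k →
      ENNReal.ofReal (c * (k : ℝ) ^ (-α)) ≤
        entropyNumber (nNorm d σ1 u1 p1 q1) (nNorm d σ2 u2 p2 q2) k) ∧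
    (∀ ε : ℝ, 0 < ε → ∃ cε : ℝ, 0 < cε ∧ ∀ k : ℕ, 0 < k →
      entropyNumber (nNorm d σ1 u1 p1 q1) (nNorm d σ2 u2 p2 q2) k ≤
        ENNReal.ofReal (cε * (k : ℝ) ^ (-α + ε))) := by
  have hu1 : 0 < u1 := hp1.trans_le hp1u1
  have hratio : 0 < 1 - p1 / u1 ∧ 0 < 1 / p1 - 1 / p2 := by
    refine (mul_pos_iff.1 ?_).resolve_right fun h => h.1.not_ge ?_
    · linarith
    · exact sub_nonneg.2 ((div_le_one hu1).2 hp1u1)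
  have hp1u1 : p1 < u1 := (div_lt_one hu1).1 (sub_pos.1 hratio.1)
  have hp : p1 ≤ p2 := (one_div_le_one_div hp2 hp1).1 (sub_pos.1 hratio.2).le
  have hu : p1 / (u1 * p2) ≤ 1 / u2 := by
    rw [mul_sub, div_mul_div_comm, div_mul_div_comm, mul_one, mul_comm u1 p1,
      div_mul_cancel_left₀ hp1.ne', inv_eq_one_div] at h1
    linarith
  have hT := Morrey.morreyDim_pos hd hp1 hp1u1
  have hD := Morrey.smoothnessExcess_eq (σ1 := σ1) (σ2 := σ2) (u1 := u1) (p1 := p1) (p2 := p2) hd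
  have hD0 := hD ▸ mul_pos (Nat.cast_pos.2 hd) (sub_pos.2 h2)
  rw [← Morrey.smoothnessExcess_div_morreyDim hd hu1.ne'] at hα
  refine ⟨?_, fun ε hε => ?_⟩
  · rw [hα]
    exact Morrey.exists_const_mul_rpow_le_entropyNumber hq1 hq2 hp1 hp2 hp1u1.le hT hD0.le
  · rw [neg_add_eq_sub, ← neg_sub]
    exact Morrey.exists_entropyNumber_le_const_mul_rpow hq1 hq2 hp1 hp hu hT hD0
      (Morrey.smoothnessExcess_le hd h3) (hα ▸ sub_lt_self α hε)

theorem stmt3 (d : ℕ) (hd : 1 ≤ d) (σ1 σ2 u1 p1 u2 p2 : ℝ) (q1 q2 : ℝ≥0∞)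
    (hq1 : 0 < q1) (hq2 : 0 < q2)
    (hp1 : 0 < p1) (hp1u1 : p1 ≤ u1) (hp2 : 0 < p2) (hp2u2 : p2 ≤ u2)
    (h1 : p1 / u1 * (1 / p1 - 1 / p2) > max 0 (1 / u1 - 1 / u2))
    (h2 : p1 / u1 * (1 / p1 - 1 / p2) < (σ1 - σ2) / d)
    (h3 : (σ1 - σ2) / d ≤ 1 / p1 - 1 / p2)
    (α : ℝ) (hα : α = u1 / (u1 - p1) * ((σ1 - σ2) / d - p1 / u1 * (1 / p1 - 1 / p2))) :
    (∃ c : ℝ, 0 < c ∧ ∀ k : ℕ, 0 < k →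
      ENNReal.ofReal (c * (k : ℝ) ^ (-α)) ≤
        entropyNumber (nNorm d σ1 u1 p1 q1) (nNorm d σ2 u2 p2 q2) k) ∧
    (∀ ε : ℝ, 0 < ε → ∃ cε : ℝ, 0 < cε ∧ ∀ k : ℕ, 0 < k →
      entropyNumber (nNorm d σ1 u1 p1 q1) (nNorm d σ2 u2 p2 q2) k ≤
        ENNReal.ofReal (cε * (k : ℝ) ^ (-α + ε))) := by
  exact stmt3_general d hd σ1 σ2 u1 p1 u2 p2 q1 q2 hq1 hq2 hp1 hp1u1 hp2
    ((le_max_right _ _).trans h1.le) h2 h3 α hα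
end

section
/- Let d ≥ 1 be an integer, σ1, σ2 ∈ ℝ, 0 < q_i ≤ ∞ and 0 < p_i ≤ u_i < ∞ for i = 1, 2. Assume p1 ≤ u2 and (σ1 − σ2)/d > 1/p1 − 1/u2. Then there exists c > 0 such that for all k ∈ ℕ, e_k(id : ñ^{σ1}_{u1,p1,q1}(Q) → ñ^{σ2}_{u2,p2,q2}(Q)) ≤ c · k^{−(σ1−σ2)/d}. -/
open scoped ENNReal NNReal

/-!
Keeping only `ν = 0` in the source norm and applying Hölder's inequality on each dyadic cube in the
target norm reduces the claim to the Besov sequence spaces `b^{σ1}_{p1,∞} = n^{σ1}_{p1,p1,∞}` and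
`b^{σ2}_{u2,q2} = n^{σ2}_{u2,u2,q2}`.

Fix a real `n` with `2 ^ (n * d) ≈ k` and round the coefficients of level `j` towards zero to a grid
whose step depends on `j - n`. Up to level `n` all coefficients are coded, with increasing relative
accuracy on coarser levels; above level `n` only those exceeding the step receive a nonzero code,
and `p1 ≤ u2` together with `(σ1 - σ2) / d > 1 / p1 - 1 / u2` makes the neglected part small. Both
the cost of the codes and the error decay geometrically in `|j - n|`, so that level `n` alone
determines the number of codes, at most `2 ^ (k - 1)`, and the error, of order
`2 ^ (-(n * (σ1 - σ2))) ≈ k ^ (-(σ1 - σ2) / d)`.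
-/

/-! ### Real inequalities -/

theorem exists_sum_two_rpow_neg_mul_abs_sub_le {κ : ℝ} (hκ : 0 < κ) :
    ∃ C : ℝ, 0 < C ∧ ∀ (n : ℝ) (s : Finset ℕ), ∑ j ∈ s, (2 : ℝ) ^ (-(κ * |(j : ℝ) - n|)) ≤ C := by
  set ρ : ℝ := (2 : ℝ) ^ (-κ) with hρ
  have hρ1 : ρ < 1 := Real.rpow_lt_one_of_one_lt_of_neg (by norm_num) (by linarith)
  have hsummable : Summable (fun l : ℤ => ρ ^ l.natAbs) := by
    have := summable_geometric_of_lt_one (by positivity : 0 ≤ ρ) hρ1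
    exact .of_nat_of_neg (by simpa using this) (by simpa using this)
  have hpos : 0 < ∑' l : ℤ, ρ ^ l.natAbs := hsummable.tsum_pos (fun _ => by positivity) 0 (by simp)
  refine ⟨2 ^ κ * ∑' l : ℤ, ρ ^ l.natAbs, by positivity, fun n s => ?_⟩
  have hterm (j : ℕ) : (2 : ℝ) ^ (-(κ * |(j : ℝ) - n|)) ≤ 2 ^ κ * ρ ^ ((j : ℤ) - ⌊n⌋).natAbs := by
    have hfloor : |n - ⌊n⌋| ≤ 1 := by
      rw [← Int.fract, Int.abs_fract]; exact (Int.fract_lt_one n).le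
    have htri : |(j : ℝ) - ⌊n⌋| ≤ |(j : ℝ) - n| + |n - ⌊n⌋| := abs_sub_le _ _ _
    rw [hρ, ← Real.rpow_natCast, ← Real.rpow_mul (by norm_num), ← Real.rpow_add (by norm_num),
      Nat.cast_natAbs]
    push_cast
    exact Real.rpow_le_rpow_of_exponent_le (by norm_num) (by nlinarith)
  calc ∑ j ∈ s, (2 : ℝ) ^ (-(κ * |(j : ℝ) - n|))
      ≤ 2 ^ κ * ∑ j ∈ s, ρ ^ ((j : ℤ) - ⌊n⌋).natAbs := by
        rw [Finset.mul_sum]; exact Finset.sum_le_sum fun j _ => hterm j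
    _ = 2 ^ κ * ∑ l ∈ s.map (Nat.castEmbedding.trans (Equiv.subRight ⌊n⌋).toEmbedding),
          ρ ^ l.natAbs := by
        rw [Finset.sum_map]; rfl
    _ ≤ 2 ^ κ * ∑' l : ℤ, ρ ^ l.natAbs := by
        gcongr; exact hsummable.sum_le_tsum _ fun _ _ => by positivity

theorem exists_add_mul_le_mul_two_rpow {κ : ℝ} (hκ : 0 < κ) {A B : ℝ} (hA : 0 < A) (hB : 0 ≤ B) :
    ∃ C : ℝ, 0 < C ∧ ∀ h : ℝ, 0 ≤ h → A + B * h ≤ C * 2 ^ (κ * h) := by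
  refine ⟨A + B / (κ * Real.log 2), by positivity, fun h hh => ?_⟩
  have hone : 1 ≤ (2 : ℝ) ^ (κ * h) := Real.one_le_rpow (by norm_num) (by positivity)
  have hlin : κ * Real.log 2 * h ≤ (2 : ℝ) ^ (κ * h) := by
    have := Real.add_one_le_exp (Real.log 2 * (κ * h))
    rw [Real.rpow_def_of_pos (by norm_num)]
    linarith
  calc A + B * h = A * 1 + B / (κ * Real.log 2) * (κ * Real.log 2 * h) := by field_simp
    _ ≤ A * 2 ^ (κ * h) + B / (κ * Real.log 2) * 2 ^ (κ * h) := by gcongr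
    _ = _ := by ring

theorem log_one_add_le_one_add_rpow_div {p y : ℝ} (hp : 0 < p) (hy : 0 ≤ y) :
    Real.log (1 + y) ≤ 1 + y ^ p / p := by
  have hlog2 : Real.log 2 ≤ 1 := by linarith [Real.log_two_lt_d9]
  rcases le_total y 1 with h | h
  · have := Real.log_le_log (by linarith) (by linarith : 1 + y ≤ 2)
    have : 0 ≤ y ^ p / p := by positivity
    linarith
  · calc Real.log (1 + y) ≤ Real.log (2 * y) := Real.log_le_log (by linarith) (by linarith)
      _ = Real.log 2 + Real.log y := Real.log_mul (by norm_num) (by linarith)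
      _ ≤ 1 + y ^ p / p := add_le_add hlog2 (Real.log_le_rpow_div hy hp)

theorem two_rpow_mul_le_of_exponent_le {A C x a b c : ℝ} (hA : A ≤ C * 2 ^ x) (hC : 0 ≤ C)
    (h : a + x ≤ b + c) : 2 ^ a * A ≤ C * 2 ^ b * (2 : ℝ) ^ c := by
  calc 2 ^ a * A ≤ 2 ^ a * (C * 2 ^ x) := by gcongr
    _ = C * 2 ^ (a + x) := by rw [Real.rpow_add (by norm_num)]; ring
    _ ≤ C * 2 ^ (b + c) := by gcongr; norm_num
    _ = C * 2 ^ b * 2 ^ c := by rw [Real.rpow_add (by norm_num)]; ring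

section PowerSums

variable {M : Type*} [Fintype M] {f : M → ℝ} {p r T B W : ℝ}

theorem sum_log_one_add_le_card_mul (hp : 0 < p) (hT : 1 ≤ T) (hf : ∀ m, 0 ≤ f m)
    (hsum : ∑ m, f m ^ p ≤ Fintype.card M * T ^ p) :
    ∑ m, Real.log (1 + f m) ≤ Fintype.card M * (1 + 1 / p + Real.log T) := by
  have hT0 : 0 < T := by linarith
  have hterm (m : M) : Real.log (1 + f m) ≤ Real.log T + (1 + f m ^ p / T ^ p / p) := by
    have hquot : 0 ≤ f m / T := div_nonneg (hf m) hT0.le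
    have hmul : T * (1 + f m / T) = T + f m := by field_simp
    calc Real.log (1 + f m) ≤ Real.log (T * (1 + f m / T)) :=
          Real.log_le_log (by linarith [hf m]) (by linarith)
      _ = Real.log T + Real.log (1 + f m / T) := Real.log_mul hT0.ne' (by positivity)
      _ ≤ Real.log T + (1 + f m ^ p / T ^ p / p) := by
          rw [← Real.div_rpow (hf m) hT0.le]
          gcongr
          exact log_one_add_le_one_add_rpow_div hp hquot
  calc ∑ m, Real.log (1 + f m) ≤ ∑ m, (Real.log T + (1 + f m ^ p / T ^ p / p)) :=
        Finset.sum_le_sum fun m _ => hterm m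
    _ = Fintype.card M * (Real.log T + 1) + (∑ m, f m ^ p) / T ^ p / p := by
        rw [Finset.sum_div, Finset.sum_div, Finset.sum_add_distrib, Finset.sum_add_distrib]
        simp only [Finset.sum_const, Finset.card_univ, nsmul_eq_mul]
        ring
    _ ≤ Fintype.card M * (Real.log T + 1) + Fintype.card M * T ^ p / T ^ p / p := by gcongr
    _ = _ := by field_simp; ring

theorem sum_log_one_add_le_mul_sum_rpow (hp : 0 < p) (hf : ∀ m, f m = 0 ∨ 1 ≤ f m) :
    ∑ m, Real.log (1 + f m) ≤ (1 + 1 / p) * ∑ m, f m ^ p := by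
  rw [Finset.mul_sum]
  refine Finset.sum_le_sum fun m _ => ?_
  rcases hf m with h | h
  · simp [h, Real.zero_rpow hp.ne']
  · calc Real.log (1 + f m) ≤ 1 + f m ^ p / p := log_one_add_le_one_add_rpow_div hp (by linarith)
      _ ≤ f m ^ p + f m ^ p / p := by gcongr; exact Real.one_le_rpow h hp.le
      _ = (1 + 1 / p) * f m ^ p := by ring

theorem sum_rpow_rpow_one_div_le_mul_card (hr : 0 < r) (hf : ∀ m, 0 ≤ f m) (hB : 0 ≤ B)
    (hfB : ∀ m, f m ≤ B) :
    (∑ m, f m ^ r) ^ (1 / r) ≤ B * (Fintype.card M : ℝ) ^ (1 / r) := by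
  have hsum : ∑ m, f m ^ r ≤ B ^ r * Fintype.card M := by
    calc ∑ m, f m ^ r ≤ ∑ _m : M, B ^ r :=
          Finset.sum_le_sum fun m _ => Real.rpow_le_rpow (hf m) (hfB m) hr.le
      _ = B ^ r * Fintype.card M := by simp [mul_comm]
  calc (∑ m, f m ^ r) ^ (1 / r) ≤ (B ^ r * Fintype.card M) ^ (1 / r) :=
        Real.rpow_le_rpow (Finset.sum_nonneg fun m _ => Real.rpow_nonneg (hf m) r) hsum
          (by positivity)
    _ = B * (Fintype.card M : ℝ) ^ (1 / r) := by
        rw [Real.mul_rpow (by positivity) (by positivity), one_div, Real.rpow_rpow_inv hB hr.ne']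

theorem sum_rpow_rpow_one_div_le_interpolate (hp : 0 < p) (hpr : p ≤ r) (hf : ∀ m, 0 ≤ f m)
    (hB : 0 ≤ B) (hfB : ∀ m, f m ≤ B) (hW : 0 ≤ W) (hsum : ∑ m, f m ^ p ≤ W ^ p) :
    (∑ m, f m ^ r) ^ (1 / r) ≤ B ^ (1 - p / r) * W ^ (p / r) := by
  have hr : 0 < r := hp.trans_le hpr
  have hle : ∑ m, f m ^ r ≤ B ^ (r - p) * W ^ p := by
    calc ∑ m, f m ^ r = ∑ m, f m ^ (r - p) * f m ^ p := by
          refine Finset.sum_congr rfl fun m _ => ?_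
          rw [← Real.rpow_add_of_nonneg (hf m) (by linarith) hp.le, sub_add_cancel]
      _ ≤ ∑ m, B ^ (r - p) * f m ^ p := by
          refine Finset.sum_le_sum fun m _ => mul_le_mul_of_nonneg_right ?_
            (Real.rpow_nonneg (hf m) p)
          exact Real.rpow_le_rpow (hf m) (hfB m) (by linarith)
      _ ≤ B ^ (r - p) * W ^ p := by rw [← Finset.mul_sum]; gcongr
  calc (∑ m, f m ^ r) ^ (1 / r) ≤ (B ^ (r - p) * W ^ p) ^ (1 / r) :=
        Real.rpow_le_rpow (Finset.sum_nonneg fun m _ => Real.rpow_nonneg (hf m) r) hle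
          (by positivity)
    _ = B ^ (1 - p / r) * W ^ (p / r) := by
        rw [Real.mul_rpow (by positivity) (by positivity), ← Real.rpow_mul hB, ← Real.rpow_mul hW]
        congr 2 <;> field_simp

end PowerSums

/-! ### Counting codes -/

section Counting

variable {E : Type*} [NormedAddCommGroup E] {s : ℝ}

theorem sum_one_add_norm_rpow_neg_le (hE : ∀ a : E, a ≠ 0 → 1 ≤ ‖a‖)
    (hs : Summable fun a : E => ‖a‖ ^ (-s)) (hs0 : 0 ≤ s) {β : ℝ} (hβ : s ≤ β) (T : Finset E) :
    ∑ a ∈ T, (1 + ‖a‖) ^ (-β) ≤ 1 + 2 ^ s * (∑' a : E, ‖a‖ ^ (-s)) * 2 ^ (-β) := by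
  classical
  have hterm : ∀ a ∈ T.erase 0, (1 + ‖a‖) ^ (-β) ≤ 2 ^ (-(β - s)) * ‖a‖ ^ (-s) := by
    intro a ha
    have hone : 1 ≤ ‖a‖ := hE a (Finset.ne_of_mem_erase ha)
    calc (1 + ‖a‖) ^ (-β) = (1 + ‖a‖) ^ (-(β - s)) * (1 + ‖a‖) ^ (-s) := by
          rw [← Real.rpow_add (by linarith)]; congr 1; ring
      _ ≤ 2 ^ (-(β - s)) * ‖a‖ ^ (-s) := by
          gcongr ?_ * ?_
          · exact Real.rpow_le_rpow_of_nonpos (by norm_num) (by linarith) (by linarith)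
          · exact Real.rpow_le_rpow_of_nonpos (by linarith) (by linarith) (by linarith)
  calc ∑ a ∈ T, (1 + ‖a‖) ^ (-β)
      ≤ ∑ a ∈ insert 0 (T.erase 0), (1 + ‖a‖) ^ (-β) :=
        Finset.sum_le_sum_of_subset_of_nonneg
          (fun a ha => by by_cases h : a = 0 <;> simp [h, ha]) fun _ _ _ => by positivity
    _ = 1 + ∑ a ∈ T.erase 0, (1 + ‖a‖) ^ (-β) := by
        rw [Finset.sum_insert (Finset.notMem_erase 0 T)]; simp
    _ ≤ 1 + ∑ a ∈ T.erase 0, 2 ^ (-(β - s)) * ‖a‖ ^ (-s) := by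
        gcongr with a ha; exact hterm a ha
    _ ≤ 1 + 2 ^ (-(β - s)) * ∑' a : E, ‖a‖ ^ (-s) := by
        rw [← Finset.mul_sum]
        gcongr
        exact hs.sum_le_tsum _ fun _ _ => by positivity
    _ = 1 + 2 ^ s * (∑' a : E, ‖a‖ ^ (-s)) * 2 ^ (-β) := by
        rw [neg_sub, sub_eq_add_neg, Real.rpow_add (by norm_num)]; ring

theorem exists_finset_injOn_restrict {I α : Type*} (G : Finset (I → α)) :
    ∃ F : Finset I, Set.InjOn F.restrict (G : Set (I → α)) := by
  classical
  have hsep (x : G.offDiag) : ∃ i, x.1.1 i ≠ x.1.2 i :=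
    Function.ne_iff.mp (Finset.mem_offDiag.mp x.2).2.2
  choose sep hsep using hsep
  refine ⟨Finset.univ.image sep, fun a ha b hb hab => by_contra fun hne => ?_⟩
  let x : G.offDiag := ⟨(a, b), Finset.mem_offDiag.mpr ⟨ha, hb, hne⟩⟩
  exact hsep x (congrFun hab ⟨sep x, Finset.mem_image_of_mem sep (Finset.mem_univ x)⟩)

theorem sum_prod_le_prod_sum_image {ι α : Type*} [Fintype ι] [DecidableEq α]
    {w : ι → α → ℝ} (hw : ∀ i l, 0 ≤ w i l) (G : Finset (ι → α)) :
    ∑ a ∈ G, ∏ i, w i (a i) ≤ ∏ i, ∑ l ∈ G.image (fun a => a i), w i l := by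
  classical
  rw [Finset.prod_univ_sum]
  refine Finset.sum_le_sum_of_subset_of_nonneg (fun a ha => ?_)
    fun a _ _ => Finset.prod_nonneg fun i _ => hw i (a i)
  exact Fintype.mem_piFinset.mpr fun i => Finset.mem_image_of_mem (fun a => a i) ha

theorem sum_prod_one_add_norm_rpow_neg_le_exp (hE : ∀ a : E, a ≠ 0 → 1 ≤ ‖a‖)
    (hs : Summable fun a : E => ‖a‖ ^ (-s)) (hs0 : 0 ≤ s) {ι : Type*} [Fintype ι] {β : ι → ℝ}
    (hβ : ∀ i, s ≤ β i) (G : Finset (ι → E)) :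
    ∑ a ∈ G, ∏ i, (1 + ‖a i‖) ^ (-β i) ≤
      Real.exp (2 ^ s * (∑' a : E, ‖a‖ ^ (-s)) * ∑ i, 2 ^ (-β i)) := by
  classical
  rw [Finset.mul_sum, Real.exp_sum]
  refine (sum_prod_le_prod_sum_image (w := fun i l => (1 + ‖l‖) ^ (-β i))
    (fun _ _ => by positivity) G).trans ?_
  refine Finset.prod_le_prod (fun _ _ => Finset.sum_nonneg fun _ _ => by positivity)
    fun i _ => (sum_one_add_norm_rpow_neg_le hE hs hs0 (hβ i) _).trans ?_
  rw [add_comm]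
  exact Real.add_one_le_exp _

/- A generating-function bound: every code in `G` contributes at least `exp (-R)` to the sum of
`∏ i, (1 + ‖a i‖) ^ (-β i)` over all codes, which factorises. -/
theorem card_le_exp_of_sum_mul_log_le (hE : ∀ a : E, a ≠ 0 → 1 ≤ ‖a‖)
    (hs : Summable fun a : E => ‖a‖ ^ (-s)) (hs0 : 0 ≤ s) {I : Type*} {β : I → ℝ}
    (hβ : ∀ i, s ≤ β i) {R S : ℝ} (G : Finset (I → E))
    (hcost : ∀ a ∈ G, ∀ F : Finset I, ∑ i ∈ F, β i * Real.log (1 + ‖a i‖) ≤ R)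
    (hweight : ∀ F : Finset I, ∑ i ∈ F, (2 : ℝ) ^ (-β i) ≤ S) :
    (G.card : ℝ) ≤ Real.exp (R + 2 ^ s * (∑' a : E, ‖a‖ ^ (-s)) * S) := by
  classical
  obtain ⟨F, hF⟩ := exists_finset_injOn_restrict G
  have hlower : (G.card : ℝ) * Real.exp (-R) ≤
      ∑ a ∈ G.image F.restrict, ∏ i, (1 + ‖a i‖) ^ (-β i) := by
    rw [Finset.sum_image hF, ← nsmul_eq_mul]
    refine Finset.card_nsmul_le_sum _ _ _ fun a ha => ?_
    calc Real.exp (-R) ≤ Real.exp (-∑ i ∈ F, β i * Real.log (1 + ‖a i‖)) :=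
          Real.exp_le_exp.mpr (neg_le_neg (hcost a ha F))
      _ = ∏ i : F, Real.exp (-(β i * Real.log (1 + ‖a i‖))) := by
          rw [← Finset.sum_coe_sort, ← Finset.sum_neg_distrib, Real.exp_sum]
      _ = ∏ i : F, (1 + ‖F.restrict a i‖) ^ (-β i) := by
          refine Finset.prod_congr rfl fun i _ => ?_
          rw [Real.rpow_def_of_pos (by positivity), Finset.restrict, ← neg_mul, mul_comm]
  have hupper : ∑ a ∈ G.image F.restrict, ∏ i, (1 + ‖a i‖) ^ (-β i) ≤
      Real.exp (2 ^ s * (∑' a : E, ‖a‖ ^ (-s)) * S) := by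
    refine (sum_prod_one_add_norm_rpow_neg_le_exp hE hs hs0 (fun i : F => hβ i) _).trans ?_
    rw [Finset.sum_coe_sort F fun i => (2 : ℝ) ^ (-β i)]
    gcongr
    exact hweight F
  calc (G.card : ℝ) = Real.exp R * (G.card * Real.exp (-R)) := by rw [Real.exp_neg]; field_simp
    _ ≤ Real.exp R * Real.exp (2 ^ s * (∑' a : E, ‖a‖ ^ (-s)) * S) := by
        gcongr; exact hlower.trans hupper
    _ = Real.exp (R + 2 ^ s * (∑' a : E, ‖a‖ ^ (-s)) * S) := (Real.exp_add _ _).symm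

end Counting

theorem exists_subset_range_of_card_le {α : Type*} [Nonempty α] {S : Set α} {N : ℕ}
    (h : ∀ G : Finset α, (G : Set α) ⊆ S → G.card ≤ N) : ∃ c : Fin N → α, S ⊆ Set.range c := by
  have hfin : S.Finite := by
    by_contra hinf
    obtain ⟨G, hG, hcard⟩ := Set.Infinite.exists_subset_card_eq hinf (N + 1)
    have := h G hG
    omega
  lift S to Finset α using hfin
  obtain ⟨e⟩ : Nonempty (S ↪ Fin N) :=
    Function.Embedding.nonempty_of_card_le (by simpa using h S subset_rfl)
  exact ⟨Function.extend e Subtype.val fun _ => Classical.arbitrary α,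
    fun a ha => ⟨e ⟨a, ha⟩, e.injective.extend_apply _ _ _⟩⟩

section EntropyNumber

variable {Λ : Type*} [AddCommGroup Λ] {N₁ N₁' N₂ N₂' : Λ → ℝ≥0∞}

theorem entropyNumber_mono (h₁ : ∀ x, N₁' x ≤ N₁ x) (h₂ : ∀ x, N₂ x ≤ N₂' x) (k : ℕ) :
    entropyNumber N₁ N₂ k ≤ entropyNumber N₁' N₂' k :=
  sInf_le_sInf fun _ ⟨hε, c, hc⟩ => ⟨hε, c, fun x hx =>
    (hc x ((h₁ x).trans hx)).imp fun _ hi => (h₂ _).trans hi⟩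

theorem entropyNumber_le_of_coding {I E : Type*} [NormedAddCommGroup E] {s : ℝ}
    (hE : ∀ a : E, a ≠ 0 → 1 ≤ ‖a‖) (hs : Summable fun a : E => ‖a‖ ^ (-s)) (hs0 : 0 ≤ s)
    {β : I → ℝ} (hβ : ∀ i, s ≤ β i) {R S : ℝ} (enc : Λ → I → E) (dec : (I → E) → Λ)
    (hcost : ∀ x, N₁ x ≤ 1 → ∀ F : Finset I, ∑ i ∈ F, β i * Real.log (1 + ‖enc x i‖) ≤ R)
    (hweight : ∀ F : Finset I, ∑ i ∈ F, (2 : ℝ) ^ (-β i) ≤ S)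
    {ε : ℝ≥0∞} (hε : 0 < ε) (herror : ∀ x, N₁ x ≤ 1 → N₂ (x - dec (enc x)) ≤ ε)
    {k : ℕ} (hk : 0 < k)
    (hbudget : 2 * (R + 2 ^ s * (∑' a : E, ‖a‖ ^ (-s)) * S) ≤ k * Real.log 2) :
    entropyNumber N₁ N₂ k ≤ ε := by
  have hcard (G : Finset (I → E)) (hG : (G : Set (I → E)) ⊆ enc '' {x | N₁ x ≤ 1}) :
      G.card ≤ 2 ^ (k - 1) := by
    have hexp := card_le_exp_of_sum_mul_log_le hE hs hs0 hβ G
      (fun a ha => by obtain ⟨x, hx, rfl⟩ := hG ha; exact hcost x hx) hweight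
    have hsq : (G.card : ℝ) ^ 2 ≤ 2 * 2 ^ (k - 1) := by
      calc (G.card : ℝ) ^ 2 ≤ Real.exp (R + 2 ^ s * (∑' a : E, ‖a‖ ^ (-s)) * S) ^ 2 := by gcongr
        _ ≤ Real.exp (k * Real.log 2) := by
            rw [← Real.exp_nat_mul]; exact Real.exp_le_exp.mpr hbudget
        _ = 2 ^ k := by rw [Real.exp_nat_mul, Real.exp_log (by norm_num)]
        _ = 2 * 2 ^ (k - 1) := (mul_pow_sub_one hk.ne' 2).symm
    have hsq' : G.card ^ 2 ≤ 2 * 2 ^ (k - 1) := by exact_mod_cast hsq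
    nlinarith
  obtain ⟨c, hc⟩ := exists_subset_range_of_card_le hcard
  refine sInf_le ⟨hε, dec ∘ c, fun x hx => ?_⟩
  obtain ⟨i, hi⟩ := hc ⟨x, hx, rfl⟩
  exact ⟨i, by rw [Function.comp_apply, hi]; exact herror x hx⟩

end EntropyNumber

/-! ### Quantization of complex numbers -/

/-- Rounding of a real number to an integer towards zero. -/
noncomputable def truncate (x : ℝ) : ℤ := SignType.sign x * ⌊|x|⌋

theorem abs_truncate_le (x : ℝ) : |(truncate x : ℝ)| ≤ |x| := by
  have hfloor : (0 : ℝ) ≤ ⌊|x|⌋ := by exact_mod_cast Int.floor_nonneg.mpr (abs_nonneg x)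
  rcases lt_trichotomy x 0 with h | rfl | h
  all_goals simp [truncate, *, abs_of_nonneg hfloor, Int.floor_le]

theorem abs_sub_truncate_le_fract (x : ℝ) : |x - truncate x| ≤ Int.fract |x| := by
  have hx : x - truncate x = SignType.sign x * Int.fract |x| := by
    rw [Int.fract, mul_sub, sign_mul_abs, truncate]
    simp
  rw [hx, abs_mul, Int.abs_fract]
  refine mul_le_of_le_one_left (Int.fract_nonneg _) ?_
  rcases SignType.sign x with _ | _ | _ <;> simp

/-- The quantizer of step `τ` on `ℂ`: real and imaginary parts, in units of `τ`, are rounded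
towards zero. Rounding towards zero does not increase the modulus, so that a small coefficient is
coded by `0`. -/
noncomputable def quantize (τ : ℝ) (z : ℂ) : Fin 2 → ℤ :=
  ![truncate (z.re / τ), truncate (z.im / τ)]

/-- The point of the lattice `τℤ[i]` with code `a`, see `quantize`. -/
noncomputable def dequantize (τ : ℝ) (a : Fin 2 → ℤ) : ℂ := ⟨τ * a 0, τ * a 1⟩

theorem one_le_norm_of_ne_zero {ι : Type*} [Fintype ι] {a : ι → ℤ} (ha : a ≠ 0) : 1 ≤ ‖a‖ := by
  obtain ⟨i, hi⟩ := Function.ne_iff.mp ha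
  have hone : (1 : ℝ) ≤ ‖a i‖ := by
    rw [Int.norm_eq_abs]; exact_mod_cast Int.one_le_abs hi
  exact hone.trans (norm_le_pi_norm a i)

theorem norm_quantize_le {τ : ℝ} (hτ : 0 < τ) (z : ℂ) : ‖quantize τ z‖ ≤ ‖z‖ / τ := by
  have hpart {t : ℝ} (ht : |t| ≤ ‖z‖) : |(truncate (t / τ) : ℝ)| ≤ ‖z‖ / τ := by
    refine (abs_truncate_le _).trans ?_
    rw [abs_div, abs_of_pos hτ]
    gcongr
  rw [pi_norm_le_iff_of_nonneg (by positivity), Fin.forall_fin_two]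
  exact ⟨hpart (Complex.abs_re_le_norm z), hpart (Complex.abs_im_le_norm z)⟩

theorem norm_sub_dequantize_quantize_le {τ : ℝ} (hτ : 0 < τ) (z : ℂ) :
    ‖z - dequantize τ (quantize τ z)‖ ≤ 2 * min τ ‖z‖ := by
  have hpart {t : ℝ} (ht : |t| ≤ ‖z‖) : |t - τ * truncate (t / τ)| ≤ min τ ‖z‖ := by
    have hscale : t - τ * truncate (t / τ) = τ * (t / τ - truncate (t / τ)) := by field_simp
    have hfloor : (0 : ℝ) ≤ ⌊|t / τ|⌋ := by exact_mod_cast Int.floor_nonneg.mpr (abs_nonneg _)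
    have hself : τ * |t / τ| = |t| := by rw [abs_div, abs_of_pos hτ]; field_simp
    rw [hscale, abs_mul, abs_of_pos hτ]
    refine (mul_le_mul_of_nonneg_left (abs_sub_truncate_le_fract _) hτ.le).trans (le_min ?_ ?_)
    · exact mul_le_of_le_one_right hτ.le (Int.fract_lt_one _).le
    · rw [Int.fract, mul_sub, hself]
      nlinarith
  calc ‖z - dequantize τ (quantize τ z)‖
      ≤ |z.re - τ * truncate (z.re / τ)| + |z.im - τ * truncate (z.im / τ)| :=
        Complex.norm_le_abs_re_add_abs_im _
    _ ≤ min τ ‖z‖ + min τ ‖z‖ :=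
        add_le_add (hpart (Complex.abs_re_le_norm z)) (hpart (Complex.abs_im_le_norm z))
    _ = 2 * min τ ‖z‖ := (two_mul _).symm

section QuantizationError

variable {M : Type*} [Fintype M] {x : M → ℂ} {p r w t : ℝ}

theorem sum_norm_quantize_rpow_le (hp : 0 < p) (hw : 0 < w) (ht : 0 < t)
    (hx : ∑ m, ‖x m‖ ^ p ≤ w ^ p) : ∑ m, ‖quantize (w * t) (x m)‖ ^ p ≤ t ^ (-p) := by
  calc ∑ m, ‖quantize (w * t) (x m)‖ ^ p ≤ ∑ m, (‖x m‖ / (w * t)) ^ p := by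
        gcongr with m; exact norm_quantize_le (by positivity) _
    _ = (∑ m, ‖x m‖ ^ p) / (w * t) ^ p := by
        rw [Finset.sum_div]
        exact Finset.sum_congr rfl fun m _ => Real.div_rpow (norm_nonneg _) (by positivity) p
    _ ≤ w ^ p / (w * t) ^ p := by gcongr
    _ = t ^ (-p) := by
        rw [Real.mul_rpow hw.le ht.le, Real.rpow_neg ht.le]; field_simp

theorem sum_norm_sub_dequantize_rpow_le_card (hr : 0 < r) (hw : 0 < w) (ht : 0 < t) :
    (∑ m, ‖x m - dequantize (w * t) (quantize (w * t) (x m))‖ ^ r) ^ (1 / r) ≤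
      2 * w * t * (Fintype.card M : ℝ) ^ (1 / r) := by
  refine sum_rpow_rpow_one_div_le_mul_card hr (fun _ => norm_nonneg _) (by positivity) fun m => ?_
  refine (norm_sub_dequantize_quantize_le (mul_pos hw ht) _).trans ?_
  rw [mul_assoc]
  gcongr
  exact min_le_left _ _

theorem sum_norm_sub_dequantize_rpow_le_interpolate (hp : 0 < p) (hpr : p ≤ r) (hw : 0 < w)
    (ht : 0 < t) (hx : ∑ m, ‖x m‖ ^ p ≤ w ^ p) :
    (∑ m, ‖x m - dequantize (w * t) (quantize (w * t) (x m))‖ ^ r) ^ (1 / r) ≤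
      2 * w * t ^ (1 - p / r) := by
  have herr (m : M) := norm_sub_dequantize_quantize_le (mul_pos hw ht) (x m)
  have hsum : ∑ m, ‖x m - dequantize (w * t) (quantize (w * t) (x m))‖ ^ p ≤ (2 * w) ^ p := by
    calc ∑ m, ‖x m - dequantize (w * t) (quantize (w * t) (x m))‖ ^ p
        ≤ ∑ m, (2 * ‖x m‖) ^ p := by
          gcongr with m; exact (herr m).trans (by gcongr; exact min_le_right _ _)
      _ = 2 ^ p * ∑ m, ‖x m‖ ^ p := by
          rw [Finset.mul_sum]
          exact Finset.sum_congr rfl fun m _ => Real.mul_rpow (by norm_num) (norm_nonneg _)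
      _ ≤ (2 * w) ^ p := by rw [Real.mul_rpow (by norm_num) hw.le]; gcongr
  refine (sum_rpow_rpow_one_div_le_interpolate (B := 2 * w * t) hp hpr (fun _ => norm_nonneg _)
    (by positivity) (fun m => (herr m).trans ?_) (by positivity) hsum).trans_eq ?_
  · rw [mul_assoc]; gcongr; exact min_le_left _ _
  · rw [Real.mul_rpow (by positivity) ht.le, mul_right_comm, ← Real.rpow_add (by positivity),
      sub_add_cancel, Real.rpow_one]

end QuantizationError

/-! ### Dyadic cubes -/

/-- The index set of the dyadic cubes `Q_{j,m}` of level `j` contained in `Q`. -/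
abbrev UnitCube (d j : ℕ) : Type := {m : Fin d → ℤ // inUnitCube d j m}

section Cubes

variable {d j ν : ℕ} {k m : Fin d → ℤ}

noncomputable instance : Fintype {m : Fin d → ℤ // cubeSub d j ν m k} :=
  Fintype.subtype
    (Fintype.piFinset fun i => Finset.Ico (k i * 2 ^ (j - ν)) ((k i + 1) * 2 ^ (j - ν)))
    (by simp [cubeSub])

theorem cubeSub_zero_iff : cubeSub d j 0 m 0 ↔ inUnitCube d j m := by
  simp [cubeSub, inUnitCube]

noncomputable instance : Fintype (UnitCube d j) :=
  Fintype.ofEquiv {m : Fin d → ℤ // cubeSub d j 0 m 0}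
    (Equiv.subtypeEquivRight fun _ => cubeSub_zero_iff)

theorem card_cubeSub :
    Fintype.card {m : Fin d → ℤ // cubeSub d j ν m k} = 2 ^ ((j - ν) * d) := by
  have hside (i : Fin d) :
      (Finset.Ico (k i * 2 ^ (j - ν)) ((k i + 1) * 2 ^ (j - ν))).card = 2 ^ (j - ν) := by
    rw [Int.card_Ico, add_one_mul, add_sub_cancel_left, Int.toNat_pow_of_nonneg zero_le_two]
    rfl
  calc Fintype.card {m : Fin d → ℤ // cubeSub d j ν m k}
      = ∏ i : Fin d, (Finset.Ico (k i * 2 ^ (j - ν)) ((k i + 1) * 2 ^ (j - ν))).card := by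
        rw [← Fintype.card_piFinset]; exact Fintype.subtype_card _ _
    _ = 2 ^ ((j - ν) * d) := by simp only [hside, Finset.prod_const, Finset.card_fin, pow_mul]

theorem card_unitCube : Fintype.card (UnitCube d j) = 2 ^ (j * d) := by
  rw [Fintype.ofEquiv_card, card_cubeSub, Nat.sub_zero]

theorem cast_card_unitCube : (Fintype.card (UnitCube d j) : ℝ) = 2 ^ ((j : ℝ) * d) := by
  rw [card_unitCube, ← Nat.cast_mul, Real.rpow_natCast]
  norm_cast

theorem inUnitCube_of_cubeSub (hν : ν ≤ j) (hk : inUnitCube d ν k) (hm : cubeSub d j ν m k) :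
    inUnitCube d j m := by
  intro i
  obtain ⟨hk0, hk1⟩ := hk i
  obtain ⟨hm0, hm1⟩ := hm i
  have hpos : (0 : ℤ) < 2 ^ (j - ν) := by positivity
  constructor
  · exact (mul_nonneg hk0 hpos.le).trans hm0
  · calc m i < (k i + 1) * 2 ^ (j - ν) := hm1
      _ ≤ 2 ^ ν * 2 ^ (j - ν) := by gcongr; omega
      _ = 2 ^ j := by rw [← pow_add, Nat.add_sub_cancel' hν]

end Cubes

/-! ### Comparison of the quasi-norms -/

section QuasiNorms

variable {d j : ℕ} {σ u p r : ℝ} {q : ℝ≥0∞}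

theorem sum_rpow_rpow_one_div_le_card_rpow_mul {M : Type*} [Fintype M] (hp : 0 < p) (hpr : p ≤ r)
    (f : M → ℝ≥0∞) :
    (∑ m, f m ^ p) ^ (1 / p) ≤ Fintype.card M ^ (1 / p - 1 / r) * (∑ m, f m ^ r) ^ (1 / r) := by
  have hr : 0 < r := hp.trans_le hpr
  have hpow (y : ℝ≥0∞) : (y ^ p) ^ (r / p) = y ^ r := by
    rw [← ENNReal.rpow_mul, mul_div_cancel₀ _ hp.ne']
  have hjensen := ENNReal.rpow_sum_le_const_mul_sum_rpow Finset.univ (fun m => f m ^ p)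
    ((one_le_div hp).mpr hpr)
  simp only [hpow, Finset.card_univ] at hjensen
  calc (∑ m, f m ^ p) ^ (1 / p) = ((∑ m, f m ^ p) ^ (r / p)) ^ (1 / r) := by
        rw [← ENNReal.rpow_mul]; congr 1; field_simp
    _ ≤ (Fintype.card M ^ (r / p - 1) * ∑ m, f m ^ r) ^ (1 / r) := by gcongr
    _ = Fintype.card M ^ (1 / p - 1 / r) * (∑ m, f m ^ r) ^ (1 / r) := by
        rw [ENNReal.mul_rpow_of_nonneg _ _ (by positivity), ← ENNReal.rpow_mul]
        congr 2; field_simp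

theorem mNorm_mono (hp : 0 < p) (hpr : p ≤ r) (lam : (Fin d → ℤ) → ℂ) :
    mNorm d u p j lam ≤ mNorm d u r j lam := by
  refine iSup_mono fun ⟨⟨ν, k⟩, hν, _⟩ => ?_
  have hcard : ((Fintype.card {m : Fin d → ℤ // cubeSub d j ν m k} : ℕ) : ℝ≥0∞) =
      2 ^ ((d : ℝ) * (j - ν)) := by
    rw [card_cubeSub, ← Nat.cast_sub hν, ← Nat.cast_mul, ENNReal.rpow_natCast, mul_comm d]
    norm_cast
  simp only [tsum_fintype]
  refine (mul_le_mul_right (sum_rpow_rpow_one_div_le_card_rpow_mul hp hpr _) _).trans_eq ?_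
  rw [hcard, ← ENNReal.rpow_mul, ← mul_assoc, ← ENNReal.rpow_add _ _ (by simp) (by simp)]
  congr 2
  ring

theorem two_rpow_mul_lqNorm_le_mNorm (lam : (Fin d → ℤ) → ℂ) :
    2 ^ (d * j * (1 / u - 1 / p)) * lqNorm d p j lam ≤ mNorm d u p j lam := by
  refine le_iSup_of_le ⟨(0, 0), Nat.zero_le _, fun i => by simp⟩ (le_of_eq ?_)
  rw [lqNorm, Nat.cast_zero, sub_zero, ← (Equiv.subtypeEquivRight fun _ =>
    cubeSub_zero_iff).tsum_eq fun m : UnitCube d j => (‖lam m‖₊ : ℝ≥0∞) ^ p]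
  rfl

theorem mNorm_self (hp : 0 < p) (lam : (Fin d → ℤ) → ℂ) :
    mNorm d p p j lam = lqNorm d p j lam := by
  refine le_antisymm (iSup_le fun ⟨⟨ν, k⟩, hν, hk⟩ => ?_)
    (by simpa using two_rpow_mul_lqNorm_le_mNorm (u := p) (p := p) lam)
  simp only [sub_self, mul_zero, ENNReal.rpow_zero, one_mul]
  exact ENNReal.rpow_le_rpow (ENNReal.tsum_mono_subtype (fun m => (‖lam m‖₊ : ℝ≥0∞) ^ p)
    fun m hm => inUnitCube_of_cubeSub hν hk hm) (by positivity)

theorem lqNorm_eq_ofReal (hp : 0 < p) (lam : (Fin d → ℤ) → ℂ) :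
    lqNorm d p j lam = ENNReal.ofReal ((∑ m : UnitCube d j, ‖lam m‖ ^ p) ^ (1 / p)) := by
  have hterm (z : ℂ) : (‖z‖₊ : ℝ≥0∞) ^ p = ENNReal.ofReal (‖z‖ ^ p) := by
    rw [← ENNReal.ofReal_rpow_of_nonneg (norm_nonneg _) hp.le, ofReal_norm]; rfl
  simp only [lqNorm, tsum_fintype, hterm]
  rw [← ENNReal.ofReal_sum_of_nonneg fun _ _ => by positivity,
    ENNReal.ofReal_rpow_of_nonneg (by positivity) (by positivity)]

theorem two_rpow_mul_mNorm_self_eq_ofReal (hp : 0 < p) (a : ℝ) (lam : (Fin d → ℤ) → ℂ) :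
    2 ^ a * mNorm d p p j lam =
      ENNReal.ofReal (2 ^ a * (∑ m : UnitCube d j, ‖lam m‖ ^ p) ^ (1 / p)) := by
  rw [mNorm_self hp, lqNorm_eq_ofReal hp, ENNReal.ofReal_mul (by positivity),
    ← ENNReal.ofReal_rpow_of_pos two_pos, ENNReal.ofReal_ofNat]

variable {x : ℕ → (Fin d → ℤ) → ℂ}

theorem two_rpow_mul_mNorm_le_nNorm (hq : 0 < q) (j : ℕ) :
    (2 : ℝ≥0∞) ^ ((j : ℝ) * (σ - d / u)) * mNorm d u p j (x j) ≤ nNorm d σ u p q x := by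
  rw [nNorm]
  split_ifs with h
  · exact le_iSup (fun j : ℕ => (2 : ℝ≥0∞) ^ ((j : ℝ) * (σ - d / u)) * mNorm d u p j (x j)) j
  · rw [one_div, ENNReal.le_rpow_inv_iff (ENNReal.toReal_pos hq.ne' h)]
    exact ENNReal.le_tsum j

theorem nNorm_self_top_le (hp : 0 < p) (hq : 0 < q) : nNorm d σ p p ∞ x ≤ nNorm d σ u p q x := by
  rw [nNorm, if_pos rfl]
  refine iSup_le fun j => le_trans ?_ (two_rpow_mul_mNorm_le_nNorm hq j)
  rw [mNorm_self hp]
  refine le_trans (le_of_eq ?_) (mul_le_mul_right (two_rpow_mul_lqNorm_le_mNorm (x j)) _)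
  rw [← mul_assoc, ← ENNReal.rpow_add _ _ (by simp) (by simp)]
  congr 2
  ring

theorem nNorm_le_nNorm_self (hp : 0 < p) (hpu : p ≤ u) : nNorm d σ u p q x ≤ nNorm d σ u u q x := by
  have hlevel (j : ℕ) := mNorm_mono (u := u) (j := j) hp hpu (x j)
  rw [nNorm, nNorm]
  split_ifs
  · gcongr; exact hlevel _
  · gcongr; exact hlevel _

theorem sum_norm_rpow_le_of_nNorm_le_one (hp : 0 < p) (hx : nNorm d σ p p ∞ x ≤ 1) (j : ℕ) :
    ∑ m : UnitCube d j, ‖x j m‖ ^ p ≤ ((2 : ℝ) ^ (-(j * (σ - d / p)))) ^ p := by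
  have hlevel := (two_rpow_mul_mNorm_le_nNorm (by simp) j).trans hx
  rw [two_rpow_mul_mNorm_self_eq_ofReal hp, ENNReal.ofReal_le_one] at hlevel
  rw [← Real.rpow_inv_le_iff_of_pos (by positivity) (by positivity) hp, ← one_div,
    Real.rpow_neg zero_le_two]
  exact (le_inv_mul_iff₀ (by positivity)).mpr hlevel |>.trans_eq (mul_one _)

theorem exists_nNorm_le_of_decay {κ : ℝ} (hκ : 0 < κ) (hq : 0 < q) :
    ∃ C : ℝ, 0 < C ∧ ∀ (n E : ℝ), 0 < E → ∀ z : ℕ → (Fin d → ℤ) → ℂ,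
      (∀ j : ℕ, (2 : ℝ≥0∞) ^ ((j : ℝ) * (σ - d / u)) * mNorm d u p j (z j) ≤
        ENNReal.ofReal (E * 2 ^ (-(κ * |j - n|)))) →
      nNorm d σ u p q z ≤ ENNReal.ofReal (C * E) := by
  by_cases h : q = ∞
  · refine ⟨1, one_pos, fun n E hE z hz => ?_⟩
    rw [nNorm, if_pos h, one_mul]
    refine iSup_le fun j => (hz j).trans (ENNReal.ofReal_le_ofReal ?_)
    exact mul_le_of_le_one_right hE.le
      (Real.rpow_le_one_of_one_le_of_nonpos one_le_two (by simp only [neg_nonpos]; positivity))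
  have hq' : 0 < q.toReal := ENNReal.toReal_pos hq.ne' h
  obtain ⟨C, hC, hsum⟩ := exists_sum_two_rpow_neg_mul_abs_sub_le (mul_pos hκ hq')
  refine ⟨C ^ (1 / q.toReal), by positivity, fun n E hE z hz => ?_⟩
  have hterm (j : ℕ) : ((2 : ℝ≥0∞) ^ ((j : ℝ) * (σ - d / u)) * mNorm d u p j (z j)) ^ q.toReal ≤
      ENNReal.ofReal (E ^ q.toReal * 2 ^ (-(κ * q.toReal * |j - n|))) := by
    refine (ENNReal.rpow_le_rpow (hz j) hq'.le).trans_eq ?_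
    rw [ENNReal.ofReal_rpow_of_nonneg (by positivity) hq'.le, Real.mul_rpow hE.le (by positivity),
      ← Real.rpow_mul zero_le_two]
    congr 3
    ring
  rw [nNorm, if_neg h, one_div, ENNReal.rpow_inv_le_iff hq',
    ENNReal.ofReal_rpow_of_nonneg (by positivity) hq'.le, Real.mul_rpow (by positivity) hE.le,
    ← Real.rpow_mul hC.le, inv_mul_cancel₀ hq'.ne', Real.rpow_one]
  refine ENNReal.summable.tsum_le_of_sum_le fun s => ?_
  refine (Finset.sum_le_sum fun j _ => hterm j).trans ?_
  rw [← ENNReal.ofReal_sum_of_nonneg (fun _ _ => by positivity), ← Finset.mul_sum, mul_comm C]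
  gcongr
  exact hsum n s

end QuasiNorms

/-! ### One level of the coding scheme -/

/-- The quantization step at level `j`, relative to the radius of the unit ball at that level, for a
code adapted to level `n`. For `j ≤ n` it makes the error at level `j` smaller than the target error
by `2 ^ (-(κ * (n - j)))` when `γ = σ1 - σ2 + κ`; for `j > n` it leaves at most
`2 ^ (n * D - 2 * κ * (j - n))` nonzero codes. -/
noncomputable def relStep (D p γ κ n j : ℝ) : ℝ :=
  2 ^ (if j ≤ n then -(j * D / p) - (n - j) * γ else (-(n * D) + 2 * κ * (j - n)) / p)

/-- The exponent `β` of the weight `(1 + ‖a‖) ^ (-β)` used to count the codes `a : Fin 2 → ℤ` at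
level `j`: it exceeds the rank `2` of the code group, so that the weights are summable, and its
growth beyond level `n` compensates the number `2 ^ (j * D)` of coefficients. -/
def codeWeight (D κ n j : ℝ) : ℝ := 3 + max (j - n) 0 * (D + 2 * κ)

section Level

variable {D p r γ κ n j σ1 σ2 : ℝ}

theorem relStep_pos : 0 < relStep D p γ κ n j := Real.rpow_pos_of_pos two_pos _

theorem relStep_rpow_neg_of_le (hp : 0 < p) (hj : j ≤ n) :
    relStep D p γ κ n j ^ (-p) = 2 ^ (j * D) * (2 ^ ((n - j) * γ)) ^ p := by
  rw [relStep, if_pos hj, ← Real.rpow_mul zero_le_two, ← Real.rpow_mul zero_le_two,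
    ← Real.rpow_add two_pos]
  congr 1
  field_simp
  ring

theorem relStep_rpow_neg_of_lt (hp : 0 < p) (hj : n < j) :
    relStep D p γ κ n j ^ (-p) = 2 ^ (n * D - 2 * κ * (j - n)) := by
  rw [relStep, if_neg hj.not_ge, ← Real.rpow_mul zero_le_two]
  congr 1
  field_simp
  ring

theorem three_le_codeWeight (hD : 0 ≤ D) (hκ : 0 ≤ κ) : 3 ≤ codeWeight D κ n j :=
  le_add_of_nonneg_right (by positivity)

theorem two_rpow_mul_two_rpow_neg_codeWeight_le (hκ : 0 ≤ κ) (hκD : 2 * κ ≤ D) :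
    2 ^ (j * D) * 2 ^ (-codeWeight D κ n j) ≤ 2 ^ (n * D) * (2 : ℝ) ^ (-(κ * |j - n|)) := by
  rw [← Real.rpow_add two_pos, ← Real.rpow_add two_pos, codeWeight]
  refine Real.rpow_le_rpow_of_exponent_le one_le_two ?_
  rcases le_total j n with hj | hj
  · rw [max_eq_right (by linarith), abs_of_nonpos (by linarith)]; nlinarith
  · rw [max_eq_left (by linarith), abs_of_nonneg (by linarith)]; nlinarith

theorem exists_mul_sum_log_le_of_le {d : ℕ} (hp : 0 < p) (hγ : 0 ≤ γ) (hκ : 0 < κ)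
    (hκd : 2 * κ ≤ d) :
    ∃ C : ℝ, 0 < C ∧ ∀ (n : ℝ) (j : ℕ), j ≤ n → ∀ f : UnitCube d j → ℝ, (∀ m, 0 ≤ f m) →
      ∑ m, f m ^ p ≤ relStep d p γ κ n j ^ (-p) →
      codeWeight d κ n j * ∑ m, Real.log (1 + f m) ≤ C * 2 ^ (n * d) * 2 ^ (-(κ * |j - n|)) := by
  obtain ⟨C, hC, hlin⟩ := exists_add_mul_le_mul_two_rpow hκ
    (by positivity : 0 < 3 * (1 + 1 / p)) (by positivity : 0 ≤ 3 * (γ * Real.log 2))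
  refine ⟨C, hC, fun n j hj f hf hsum => ?_⟩
  have hnj : 0 ≤ n - j := sub_nonneg.mpr hj
  rw [relStep_rpow_neg_of_le hp hj, ← cast_card_unitCube] at hsum
  have hlog := sum_log_one_add_le_card_mul hp (Real.one_le_rpow one_le_two (by positivity)) hf hsum
  rw [cast_card_unitCube, Real.log_rpow two_pos] at hlog
  rw [abs_of_nonpos (by linarith), codeWeight, max_eq_right (by linarith)]
  calc (3 + 0 * (d + 2 * κ)) * ∑ m, Real.log (1 + f m)
      ≤ (3 + 0 * (d + 2 * κ)) * (2 ^ ((j : ℝ) * d) * (1 + 1 / p + (n - j) * γ * Real.log 2)) := by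
        gcongr
    _ = 2 ^ ((j : ℝ) * d) * (3 * (1 + 1 / p) + 3 * (γ * Real.log 2) * (n - j)) := by ring
    _ ≤ C * 2 ^ (n * d) * 2 ^ (-(κ * -(j - n))) :=
        two_rpow_mul_le_of_exponent_le (hlin _ hnj) hC.le (by nlinarith)

theorem exists_mul_sum_log_le_of_lt {d : ℕ} (hp : 0 < p) (hκ : 0 < κ) :
    ∃ C : ℝ, 0 < C ∧ ∀ (n : ℝ) (j : ℕ), n < j → ∀ f : UnitCube d j → ℝ,
      (∀ m, f m = 0 ∨ 1 ≤ f m) → ∑ m, f m ^ p ≤ relStep d p γ κ n j ^ (-p) →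
      codeWeight d κ n j * ∑ m, Real.log (1 + f m) ≤ C * 2 ^ (n * d) * 2 ^ (-(κ * |j - n|)) := by
  obtain ⟨C, hC, hlin⟩ := exists_add_mul_le_mul_two_rpow hκ
    (by positivity : 0 < 3 * (1 + 1 / p)) (by positivity : 0 ≤ (d + 2 * κ) * (1 + 1 / p))
  refine ⟨C, hC, fun n j hj f hf hsum => ?_⟩
  have hjn : 0 ≤ j - n := by linarith
  have hlog := (sum_log_one_add_le_mul_sum_rpow hp hf).trans
    (mul_le_mul_of_nonneg_left hsum (by positivity))
  rw [relStep_rpow_neg_of_lt hp hj] at hlog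
  rw [abs_of_nonneg hjn, codeWeight, max_eq_left hjn]
  calc (3 + (j - n) * (d + 2 * κ)) * ∑ m, Real.log (1 + f m)
      ≤ (3 + (j - n) * (d + 2 * κ)) * ((1 + 1 / p) * 2 ^ (n * d - 2 * κ * (j - n))) := by gcongr
    _ = 2 ^ (n * d - 2 * κ * (j - n)) *
          (3 * (1 + 1 / p) + (d + 2 * κ) * (1 + 1 / p) * (j - n)) := by ring
    _ ≤ C * 2 ^ (n * d) * 2 ^ (-(κ * (j - n))) :=
        two_rpow_mul_le_of_exponent_le (hlin _ hjn) hC.le (by linarith)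

theorem exists_codeWeight_mul_sum_log_le {d : ℕ} (hp : 0 < p) (hγ : 0 ≤ γ) (hκ : 0 < κ)
    (hκd : 2 * κ ≤ d) :
    ∃ C : ℝ, 0 < C ∧ ∀ (n : ℝ) (j : ℕ) (f : UnitCube d j → ℝ), (∀ m, f m = 0 ∨ 1 ≤ f m) →
      ∑ m, f m ^ p ≤ relStep d p γ κ n j ^ (-p) →
      codeWeight d κ n j * ∑ m, Real.log (1 + f m) ≤ C * 2 ^ (n * d) * 2 ^ (-(κ * |j - n|)) := by
  obtain ⟨C₁, hC₁, hdense⟩ := exists_mul_sum_log_le_of_le hp hγ hκ hκd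
  obtain ⟨C₂, -, hsparse⟩ := exists_mul_sum_log_le_of_lt (d := d) (γ := γ) hp hκ
  refine ⟨max C₁ C₂, lt_max_of_lt_left hC₁, fun n j f hf hsum => ?_⟩
  rcases le_or_gt (j : ℝ) n with hj | hj
  · have hf0 (m : UnitCube d j) : 0 ≤ f m := (hf m).elim (fun h => h.ge) zero_le_one.trans
    exact (hdense n j hj f hf0 hsum).trans (by gcongr; exact le_max_left _ _)
  · exact (hsparse n j hj f hf hsum).trans (by gcongr; exact le_max_right _ _)

theorem two_rpow_mul_dense_error_eq (hj : j ≤ n) :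
    2 ^ (j * (σ2 - D / r)) * (2 * 2 ^ (-(j * (σ1 - D / p))) *
      relStep D p (σ1 - σ2 + κ) κ n j * (2 ^ (j * D)) ^ (1 / r)) =
    2 * 2 ^ (-(n * (σ1 - σ2))) * (2 : ℝ) ^ (-(κ * |j - n|)) := by
  rw [relStep, if_pos hj, abs_of_nonpos (by linarith), ← Real.rpow_mul zero_le_two]
  simp only [mul_assoc, mul_left_comm _ (2 : ℝ), ← Real.rpow_add two_pos]
  congr 2
  ring

theorem two_rpow_mul_sparse_error_le (hp : 0 < p) (hr : 0 < r) (hj : n < j)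
    (hκ : κ * (1 + 2 * (1 / p - 1 / r)) ≤ σ1 - σ2 - D * (1 / p - 1 / r)) :
    2 ^ (j * (σ2 - D / r)) * (2 * 2 ^ (-(j * (σ1 - D / p))) *
      relStep D p (σ1 - σ2 + κ) κ n j ^ (1 - p / r)) ≤
    2 * 2 ^ (-(n * (σ1 - σ2))) * (2 : ℝ) ^ (-(κ * |j - n|)) := by
  rw [relStep, if_neg hj.not_ge, abs_of_pos (by linarith), ← Real.rpow_mul zero_le_two]
  simp only [mul_assoc, mul_left_comm _ (2 : ℝ), ← Real.rpow_add two_pos]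
  refine mul_le_mul_of_nonneg_left (Real.rpow_le_rpow_of_exponent_le one_le_two ?_) zero_le_two
  have hα : (-(n * D) + 2 * (κ * (j - n))) / p * (1 - p / r) =
      (-(n * D) + 2 * (κ * (j - n))) * (1 / p - 1 / r) := by field_simp
  rw [hα]
  have := mul_le_mul_of_nonneg_left hκ (sub_nonneg.mpr hj.le)
  linear_combination this

/-- The quantization step at level `j` of the code of accuracy `2 ^ (-(n * (σ1 - σ2)))`: `relStep`
rescaled to the level-`j` section of the unit ball of `n^{σ1}_{p,p,∞}`, which is the `ℓ_p`-ball of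
radius `2 ^ (-(j * (σ1 - D / p)))`. -/
noncomputable def quantStep (D σ1 σ2 p κ n j : ℝ) : ℝ :=
  2 ^ (-(j * (σ1 - D / p))) * relStep D p (σ1 - σ2 + κ) κ n j

theorem two_rpow_mul_sum_norm_sub_dequantize_le {d j : ℕ} (hp : 0 < p) (hpr : p ≤ r)
    (hκ : κ * (1 + 2 * (1 / p - 1 / r)) ≤ σ1 - σ2 - d * (1 / p - 1 / r)) {x : UnitCube d j → ℂ}
    (hx : ∑ m, ‖x m‖ ^ p ≤ ((2 : ℝ) ^ (-(j * (σ1 - d / p)))) ^ p) :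
    2 ^ (j * (σ2 - d / r)) * (∑ m, ‖x m - dequantize (quantStep d σ1 σ2 p κ n j)
      (quantize (quantStep d σ1 σ2 p κ n j) (x m))‖ ^ r) ^ (1 / r) ≤
    2 * 2 ^ (-(n * (σ1 - σ2))) * (2 : ℝ) ^ (-(κ * |j - n|)) := by
  have hr : 0 < r := hp.trans_le hpr
  rcases le_or_gt (j : ℝ) n with hj | hj
  · rw [← two_rpow_mul_dense_error_eq (D := d) (p := p) (r := r) hj, ← cast_card_unitCube]
    gcongr
    exact sum_norm_sub_dequantize_rpow_le_card hr (by positivity) relStep_pos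
  · refine le_trans ?_ (two_rpow_mul_sparse_error_le hp hr hj hκ)
    gcongr
    exact sum_norm_sub_dequantize_rpow_le_interpolate hp hpr (by positivity) relStep_pos hx

end Level

/-! ### The coding scheme -/

theorem sum_sigma_le_of_forall_sum_le {ι : Type*} {M : ι → Type*} [∀ j, Fintype (M j)]
    {f : (Σ j, M j) → ℝ} (hf : ∀ i, 0 ≤ f i) {b : ι → ℝ} (hfb : ∀ j, ∑ m, f ⟨j, m⟩ ≤ b j) {B : ℝ}
    (hb : ∀ s : Finset ι, ∑ j ∈ s, b j ≤ B) (F : Finset (Σ j, M j)) : ∑ i ∈ F, f i ≤ B := by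
  classical
  calc ∑ i ∈ F, f i ≤ ∑ i ∈ (F.image Sigma.fst).sigma fun _ => Finset.univ, f i :=
        Finset.sum_le_sum_of_subset_of_nonneg
          (fun i hi => by simpa using ⟨i.2, hi⟩) fun i _ _ => hf i
    _ = ∑ j ∈ F.image Sigma.fst, ∑ m, f ⟨j, m⟩ := Finset.sum_sigma _ _ _
    _ ≤ ∑ j ∈ F.image Sigma.fst, b j := Finset.sum_le_sum fun j _ => hfb j
    _ ≤ B := hb _

/-- The code of a sequence: the coefficients of level `j` are quantized with step `τ j`. -/
noncomputable def encode {d : ℕ} (τ : ℕ → ℝ) (x : ℕ → (Fin d → ℤ) → ℂ)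
    (i : Σ j, UnitCube d j) : Fin 2 → ℤ :=
  quantize (τ i.1) (x i.1 i.2)

open Classical in
/-- The sequence with code `a`, see `encode`; it vanishes at the cubes that are not contained
in `Q`. -/
noncomputable def decode {d : ℕ} (τ : ℕ → ℝ) (a : (Σ j, UnitCube d j) → Fin 2 → ℤ)
    (j : ℕ) (m : Fin d → ℤ) : ℂ :=
  if h : inUnitCube d j m then dequantize (τ j) (a ⟨j, m, h⟩) else 0

section Scheme

variable {d : ℕ} {p r κ σ1 σ2 : ℝ} {q : ℝ≥0∞}

theorem sub_decode_encode_apply (τ : ℕ → ℝ) (x : ℕ → (Fin d → ℤ) → ℂ) {j : ℕ} (m : UnitCube d j) :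
    (x - decode τ (encode τ x)) j m = x j m - dequantize (τ j) (quantize (τ j) (x j m)) := by
  simp [decode, encode, m.2]

theorem sum_norm_encode_rpow_le {n : ℝ} {x : ℕ → (Fin d → ℤ) → ℂ} (hp : 0 < p)
    (hx : nNorm d σ1 p p ∞ x ≤ 1) (j : ℕ) :
    ∑ m : UnitCube d j, ‖encode (fun j => quantStep d σ1 σ2 p κ n j) x ⟨j, m⟩‖ ^ p ≤
      relStep d p (σ1 - σ2 + κ) κ n j ^ (-p) := by
  simp only [encode, quantStep]
  exact sum_norm_quantize_rpow_le hp (Real.rpow_pos_of_pos two_pos _) relStep_pos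
    (sum_norm_rpow_le_of_nNorm_le_one hp hx j)

theorem exists_sum_codeWeight_mul_log_le (hp : 0 < p) (hκ : 0 < κ) (hκd : 2 * κ ≤ d)
    (hσ : 0 ≤ σ1 - σ2) :
    ∃ C : ℝ, 0 < C ∧ ∀ (n : ℝ) (x : ℕ → (Fin d → ℤ) → ℂ), nNorm d σ1 p p ∞ x ≤ 1 →
      ∀ F : Finset (Σ j, UnitCube d j), ∑ i ∈ F, codeWeight d κ n i.1 *
        Real.log (1 + ‖encode (fun j => quantStep d σ1 σ2 p κ n j) x i‖) ≤ C * 2 ^ (n * d) := by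
  obtain ⟨Cκ, hCκ, hgeom⟩ := exists_sum_two_rpow_neg_mul_abs_sub_le hκ
  obtain ⟨C, hC, hlevel⟩ := exists_codeWeight_mul_sum_log_le (d := d) hp
    (by linarith : 0 ≤ σ1 - σ2 + κ) hκ hκd
  refine ⟨C * Cκ, by positivity, fun n x hx F => ?_⟩
  have hweight (j : ℝ) := (three_le_codeWeight (n := n) (j := j) d.cast_nonneg hκ.le)
  refine sum_sigma_le_of_forall_sum_le (b := fun j : ℕ => C * 2 ^ (n * d) * 2 ^ (-(κ * |j - n|)))
    (fun i => mul_nonneg (by linarith [hweight i.1]) (Real.log_nonneg (by simp)))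
    (fun j => ?_) (fun s => ?_) F
  · simp only [← Finset.mul_sum]
    exact hlevel n j (fun m => ‖encode (fun j => quantStep d σ1 σ2 p κ n j) x ⟨j, m⟩‖)
      (fun m => or_iff_not_imp_left.mpr fun h => one_le_norm_of_ne_zero (norm_ne_zero_iff.mp h))
      (sum_norm_encode_rpow_le hp hx j)
  · rw [← Finset.mul_sum, mul_right_comm]
    gcongr
    exact hgeom n s

theorem exists_sum_two_rpow_neg_codeWeight_le (hκ : 0 < κ) (hκd : 2 * κ ≤ d) :
    ∃ C : ℝ, 0 < C ∧ ∀ (n : ℝ) (F : Finset (Σ j, UnitCube d j)),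
      ∑ i ∈ F, (2 : ℝ) ^ (-codeWeight d κ n i.1) ≤ C * 2 ^ (n * d) := by
  obtain ⟨C, hC, hgeom⟩ := exists_sum_two_rpow_neg_mul_abs_sub_le hκ
  refine ⟨C, hC, fun n F => ?_⟩
  refine sum_sigma_le_of_forall_sum_le (b := fun j : ℕ => 2 ^ (n * d) * 2 ^ (-(κ * |j - n|)))
    (fun i => by positivity) (fun j => ?_) (fun s => ?_) F
  · simp only [Finset.sum_const, Finset.card_univ, nsmul_eq_mul, cast_card_unitCube]
    exact two_rpow_mul_two_rpow_neg_codeWeight_le hκ.le hκd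
  · rw [← Finset.mul_sum, mul_comm]
    gcongr
    exact hgeom n s

theorem exists_nNorm_sub_decode_encode_le (hq : 0 < q) (hp : 0 < p) (hpr : p ≤ r) (hκ : 0 < κ)
    (hκσ : κ * (1 + 2 * (1 / p - 1 / r)) ≤ σ1 - σ2 - d * (1 / p - 1 / r)) :
    ∃ C : ℝ, 0 < C ∧ ∀ (n : ℝ) (x : ℕ → (Fin d → ℤ) → ℂ), nNorm d σ1 p p ∞ x ≤ 1 →
      let τ : ℕ → ℝ := fun j => quantStep d σ1 σ2 p κ n j
      nNorm d σ2 r r q (x - decode τ (encode τ x)) ≤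
        ENNReal.ofReal (C * 2 ^ (-(n * (σ1 - σ2)))) := by
  obtain ⟨C, hC, hdecay⟩ := exists_nNorm_le_of_decay (d := d) (σ := σ2) (u := r) (p := r) hκ hq
  refine ⟨C * 2, by positivity, fun n x hx => ?_⟩
  rw [mul_assoc]
  refine hdecay n _ (by positivity) _ fun j => ?_
  rw [two_rpow_mul_mNorm_self_eq_ofReal (hp.trans_le hpr)]
  simp only [sub_decode_encode_apply]
  exact ENNReal.ofReal_le_ofReal (two_rpow_mul_sum_norm_sub_dequantize_le hp hpr hκσ
    (sum_norm_rpow_le_of_nNorm_le_one hp hx j))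

theorem exists_decay_rate {D α s : ℝ} (hD : 0 < D) (hα : 0 ≤ α) (hs : D * α < s) :
    ∃ κ : ℝ, 0 < κ ∧ 2 * κ ≤ D ∧ κ * (1 + 2 * α) ≤ s - D * α := by
  refine ⟨min (D / 2) ((s - D * α) / (1 + 2 * α)),
    lt_min (by positivity) (div_pos (by linarith) (by positivity)), ?_, ?_⟩
  · linarith [min_le_left (D / 2) ((s - D * α) / (1 + 2 * α))]
  · exact (le_div_iff₀ (by positivity)).mp (min_le_right _ _)

theorem exists_entropyNumber_nNorm_self_le_two_rpow (hd : 0 < d) (hq : 0 < q) (hp : 0 < p)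
    (hpr : p ≤ r) (hσ : 1 / p - 1 / r < (σ1 - σ2) / d) :
    ∃ B C : ℝ, 0 < B ∧ 0 < C ∧ ∀ (n : ℝ) (k : ℕ), 0 < k → B * 2 ^ (n * d) ≤ k →
      entropyNumber (nNorm d σ1 p p ∞) (nNorm d σ2 r r q) k ≤
        ENNReal.ofReal (C * 2 ^ (-(n * (σ1 - σ2)))) := by
  have hd' : (0 : ℝ) < d := by exact_mod_cast hd
  have hα : 0 ≤ 1 / p - 1 / r := sub_nonneg.mpr (one_div_le_one_div_of_le hp hpr)
  have hs : d * (1 / p - 1 / r) < σ1 - σ2 := by rwa [lt_div_iff₀' hd'] at hσ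
  obtain ⟨κ, hκ, hκd, hκσ⟩ := exists_decay_rate hd' hα hs
  obtain ⟨A, hA, hcost⟩ := exists_sum_codeWeight_mul_log_le hp hκ hκd
    ((mul_nonneg hd'.le hα).trans hs.le)
  obtain ⟨W, hW, hweight⟩ := exists_sum_two_rpow_neg_codeWeight_le hκ hκd
  obtain ⟨C, hC, herror⟩ := exists_nNorm_sub_decode_encode_le hq hp hpr hκ hκσ
  have halphabet : Summable fun a : Fin 2 → ℤ => ‖a‖ ^ (-3 : ℝ) :=
    EisensteinSeries.summable_one_div_norm_rpow (by norm_num)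
  set Z : ℝ := 2 ^ (3 : ℝ) * ∑' a : Fin 2 → ℤ, ‖a‖ ^ (-3 : ℝ) with hZ
  have hZ0 : 0 ≤ Z := by positivity
  refine ⟨2 * (A + Z * W) / Real.log 2, C, by positivity, hC, fun n k hk hB => ?_⟩
  refine entropyNumber_le_of_coding (fun _ => one_le_norm_of_ne_zero) halphabet (by norm_num)
    (fun i => three_le_codeWeight d.cast_nonneg hκ.le) _ _ (hcost n) (hweight n)
    (ENNReal.ofReal_pos.mpr (by positivity)) (herror n) hk ?_
  rw [← hZ]
  calc 2 * (A * 2 ^ (n * d) + Z * (W * 2 ^ (n * d)))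
      = 2 * (A + Z * W) / Real.log 2 * 2 ^ (n * d) * Real.log 2 := by field_simp
    _ ≤ k * Real.log 2 := by gcongr

theorem exists_entropyNumber_nNorm_self_le (hd : 0 < d) (hq : 0 < q) (hp : 0 < p) (hpr : p ≤ r)
    (hσ : 1 / p - 1 / r < (σ1 - σ2) / d) :
    ∃ c : ℝ, 0 < c ∧ ∀ k : ℕ, 0 < k →
      entropyNumber (nNorm d σ1 p p ∞) (nNorm d σ2 r r q) k ≤
        ENNReal.ofReal (c * (k : ℝ) ^ (-(σ1 - σ2) / d)) := by
  obtain ⟨B, C, hB, hC, hentropy⟩ := exists_entropyNumber_nNorm_self_le_two_rpow hd hq hp hpr hσ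
  refine ⟨C * B ^ ((σ1 - σ2) / d), by positivity, fun k hk => ?_⟩
  have hk' : (0 : ℝ) < k := by exact_mod_cast hk
  have hd' : (0 : ℝ) < d := by exact_mod_cast hd
  set n : ℝ := Real.logb 2 (k / B) / d with hn
  have htwo (a : ℝ) : (2 : ℝ) ^ (n * a) = (k / B) ^ (a / d) := by
    rw [hn, div_mul_eq_mul_div, mul_div_assoc, Real.rpow_mul zero_le_two,
      Real.rpow_logb two_pos (by norm_num) (by positivity)]
  refine (hentropy n k hk ?_).trans_eq ?_
  · rw [htwo, div_self hd'.ne', Real.rpow_one, mul_div_cancel₀ _ hB.ne']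
  · rw [← mul_neg, htwo, Real.div_rpow hk'.le hB.le, neg_div, Real.rpow_neg hB.le, div_inv_eq_mul,
      mul_assoc, mul_comm (B ^ _)]

end Scheme

theorem stmt4_general (d : ℕ) (hd : 1 ≤ d) (σ1 σ2 u1 p1 u2 p2 : ℝ) (q1 q2 : ℝ≥0∞)
    (hq1 : 0 < q1) (hq2 : 0 < q2) (hp1 : 0 < p1) (hp2 : 0 < p2) (hp2u2 : p2 ≤ u2) (h1 : p1 ≤ u2)
    (h2 : (σ1 - σ2) / d > 1 / p1 - 1 / u2) :
    ∃ c : ℝ, 0 < c ∧ ∀ k : ℕ, 0 < k →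
      entropyNumber (nNorm d σ1 u1 p1 q1) (nNorm d σ2 u2 p2 q2) k ≤
        ENNReal.ofReal (c * (k : ℝ) ^ (-(σ1 - σ2) / d)) := by
  obtain ⟨c, hc, hentropy⟩ := exists_entropyNumber_nNorm_self_le hd hq2 hp1 h1 h2
  refine ⟨c, hc, fun k hk => (entropyNumber_mono ?_ ?_ k).trans (hentropy k hk)⟩
  · exact fun x => nNorm_self_top_le hp1 hq1
  · exact fun x => nNorm_le_nNorm_self hp2 hp2u2

theorem stmt4 (d : ℕ) (hd : 1 ≤ d) (σ1 σ2 u1 p1 u2 p2 : ℝ) (q1 q2 : ℝ≥0∞)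
    (hq1 : 0 < q1) (hq2 : 0 < q2)
    (hp1 : 0 < p1) (hp1u1 : p1 ≤ u1) (hp2 : 0 < p2) (hp2u2 : p2 ≤ u2)
    (h1 : p1 ≤ u2)
    (h2 : (σ1 - σ2) / d > 1 / p1 - 1 / u2) :
    ∃ c : ℝ, 0 < c ∧ ∀ k : ℕ, 0 < k →
      entropyNumber (nNorm d σ1 u1 p1 q1) (nNorm d σ2 u2 p2 q2) k ≤
        ENNReal.ofReal (c * (k : ℝ) ^ (-(σ1 - σ2) / d)) :=
  stmt4_general d hd σ1 σ2 u1 p1 u2 p2 q1 q2 hq1 hq2 hp1 hp2 hp2u2 h1 h2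
end
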